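/- arXiv:2405.08390 — 2 statements merged into one kernel-verified Lean document; each statement's English description precedes it below -/
import Mathlib

section
/- Let d ≥ 2. (i) For every f ∈ C_c^∞(ℝ^d;ℝ^d) there exists a smooth matrix field U ∈ C^∞(ℝ^d; S₀^{d×d}) with div U = f. (ii) Moreover, for every f ∈ C_c^∞(ℝ^d;ℝ^d) there exists a smooth matrix field V ∈ C^∞(ℝ^d; S₀^{d×d}) with div V = Δ²f, supp V ⊆ supp f, and ∫_{ℝ^d} V(x) dx = 0. -/
open MeasureTheory

noncomputable section

/-- Vectors in ℝ^d. -/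
abbrev Vec (d : ℕ) := Fin d → ℝ

/-- Matrices (as functions) on ℝ^d. -/
abbrev Mat (d : ℕ) := Fin d → Fin d → ℝ

/-- Partial derivative ∂ᵢ of a scalar function. -/
def pd {d : ℕ} (i : Fin d) (f : Vec d → ℝ) (x : Vec d) : ℝ :=
  fderiv ℝ f x (Pi.single i 1)

/-- The Laplacian of a scalar function. -/
def lap {d : ℕ} (f : Vec d → ℝ) (x : Vec d) : ℝ := ∑ i, pd i (fun y => pd i f y) x

/-- The bi-Laplacian Δ² of a scalar function. -/
def bilap {d : ℕ} (f : Vec d → ℝ) (x : Vec d) : ℝ := lap (fun y => lap f y) x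

/-!
Both parts rest on an explicit ansatz.

(i) By linearity it is enough to reach `h e_i` with `h` scalar. Choose `j ≠ i`. If
`∂_i p + ∂_j q = h` and `∂_j p = ∂_i q`, then `p (E_ii - E_jj) + q (E_ij + E_ji)` is symmetric
and trace-free with divergence `h e_i`. For `w = p - √-1 q` the two equations together say
`(∂_i + √-1 ∂_j) w = h`, which is solved by the Cauchy transform of `h` in the `(i, j)`-plane,
the other variables being parameters. That it is a solution is the Cauchy-Pompeiu formula at the
origin of the plane: in polar coordinates the Jacobian `r` turns `z⁻¹ (∂_x + √-1 ∂_y) k`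
into the radial derivative of `k`, which integrates to `-k(0)` along every ray, plus
`√-1 / r` times the angular derivative, which integrates to zero over every circle.

(ii) A third-order differential operator applied to `f` has all the algebraic properties required
of `V`; since it only involves commuting derivatives, these are identities over any commuting family
of endomorphisms. Being differential, it does not enlarge supports, and its values are sums of
derivatives of compactly supported functions, so they integrate to zero.
-/

section CauchyPompeiu

open Complex Set
open scoped Real

lemma locallyIntegrable_complex_inv : LocallyIntegrable (fun z : ℂ => z⁻¹) :=
  locallyIntegrable_of_norm_le_rpow (C := 1) (α := 1) (by simp) (by simp)
    (.of_forall fun z => by simp [Real.rpow_neg_one])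
    (Measurable.aestronglyMeasurable (by fun_prop))

lemma integral_Ioi_fderiv_smul {E F : Type*} [NormedAddCommGroup E] [NormedSpace ℝ E]
    [NormedAddCommGroup F] [NormedSpace ℝ F] [CompleteSpace F] {k : E → F}
    (hk : ContDiff ℝ 1 k) (hc : HasCompactSupport k) {e : E} (he : e ≠ 0) :
    ∫ r in Ioi (0 : ℝ), fderiv ℝ k (r • e) e = -k 0 := by
  have hderiv (r : ℝ) : deriv (fun s : ℝ => k (s • e)) r = fderiv ℝ k (r • e) e := by
    have hline : HasDerivAt (fun s : ℝ => s • e) e r := by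
      simpa using (hasDerivAt_id r).smul_const e
    exact ((hk.differentiable one_ne_zero _).hasFDerivAt.comp_hasDerivAt r hline).deriv
  have hray : HasCompactSupport (fun s : ℝ => k (s • e)) :=
    hc.comp_isClosedEmbedding (isClosedEmbedding_smul_left he)
  have hsmooth : ContDiff ℝ 1 (fun s : ℝ => k (s • e)) := hk.comp (by fun_prop)
  simpa [hderiv] using hray.integral_Ioi_deriv_eq hsmooth 0

lemma integral_fderiv_smul_circleMap {F : Type*} [NormedAddCommGroup F] [NormedSpace ℝ F]
    [CompleteSpace F] {k : ℂ → F} (hk : ContDiff ℝ 1 k) {r : ℝ} (hr : r ≠ 0) :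
    ∫ θ in Ioo (-π) π,
      fderiv ℝ k (r • circleMap 0 1 θ) (circleMap 0 1 θ * I) = 0 := by
  have hderiv (θ : ℝ) : HasDerivAt (fun t => r⁻¹ • k (r • circleMap 0 1 t))
      (fderiv ℝ k (r • circleMap 0 1 θ) (circleMap 0 1 θ * I)) θ := by
    have := (hk.differentiable one_ne_zero _).hasFDerivAt.comp_hasDerivAt θ
      ((hasDerivAt_circleMap 0 1 θ).const_smul r)
    exact (this.const_smul r⁻¹).congr_deriv (by rw [map_smul, inv_smul_smul₀ hr]; rfl)
  have hcont : Continuous fun θ =>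
      fderiv ℝ k (r • circleMap 0 1 θ) (circleMap 0 1 θ * I) := by
    have := hk.continuous_fderiv one_ne_zero
    fun_prop
  rw [← integral_Ioc_eq_integral_Ioo,
    ← intervalIntegral.integral_of_le (neg_le_self Real.pi_pos.le),
    intervalIntegral.integral_eq_sub_of_hasDerivAt (fun θ _ => hderiv θ)
      (hcont.intervalIntegrable _ _)]
  simp [circleMap]

lemma integrableOn_polarCoord_target {F : Type*} [NormedAddCommGroup F] {φ : ℝ × ℝ → F}
    (hφ : Continuous φ) {R : ℝ} (hR : ∀ p : ℝ × ℝ, R < p.1 → φ p = 0) :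
    IntegrableOn φ polarCoord.target := by
  have hbox : IntegrableOn φ (Icc 0 R ×ˢ Icc (-π) π) :=
    hφ.continuousOn.integrableOn_compact (isCompact_Icc.prod isCompact_Icc)
  refine hbox.of_forall_sdiff_eq_zero polarCoord.open_target.measurableSet fun p hp => hR p ?_
  simp only [polarCoord_target, mem_sdiff, mem_prod, mem_Ioi, mem_Ioo, mem_Icc] at hp
  by_contra! h
  exact hp.2 ⟨⟨hp.1.1.le, h⟩, hp.1.2.1.le, hp.1.2.2.le⟩

lemma integrableOn_polarCoord_target_of_hasCompactSupport {F G : Type*}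
    [NormedAddCommGroup F] [NormedAddCommGroup G] [NormedSpace ℝ F] [NormedSpace ℝ G]
    {A : ℂ → F →L[ℝ] G} (hA : Continuous A) (hc : HasCompactSupport A) {v : ℝ → F}
    (hv : Continuous v) :
    IntegrableOn (fun p : ℝ × ℝ => A (p.1 • circleMap 0 1 p.2) (v p.2)) polarCoord.target := by
  obtain ⟨R, hR⟩ := hc.isCompact.isBounded.exists_norm_le
  refine integrableOn_polarCoord_target (by fun_prop) fun (p : ℝ × ℝ) (hp : R < p.1) => ?_
  have hnorm : R < ‖p.1 • circleMap 0 1 p.2‖ := by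
    simpa [norm_smul] using hp.trans_le (le_abs_self p.1)
  rw [image_eq_zero_of_notMem_tsupport fun h => (hR _ h).not_gt hnorm]
  rfl

lemma polarCoord_symm_eq_smul_circleMap (p : ℝ × ℝ) :
    Complex.polarCoord.symm p = p.1 • circleMap 0 1 p.2 := by
  simp [circleMap, Complex.exp_mul_I, Complex.polarCoord_symm_apply, mul_add]

variable {F : Type*} [NormedAddCommGroup F] [NormedSpace ℂ F]

lemma smul_map_one_add_I_smul_map_I (A : ℂ →L[ℝ] F) {z : ℂ} (hz : ‖z‖ = 1) :
    z⁻¹ • (A 1 + I • A I) = A z + I • A (z * I) := by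
  have hA (w : ℂ) : A w = w.re • A 1 + w.im • A I := by
    rw [← map_smul, ← map_smul, ← map_add]
    congr 1
    apply Complex.ext <;> simp
  rw [Complex.inv_eq_conj hz, hA z, hA (z * I)]
  simp only [← Complex.coe_smul]
  match_scalars <;> apply Complex.ext <;> simp

theorem integral_inv_smul_fderiv_one_add_I_smul_fderiv_I [CompleteSpace F] {k : ℂ → F}
    (hk : ContDiff ℝ 1 k) (hc : HasCompactSupport k) :
    ∫ z : ℂ, z⁻¹ • (fderiv ℝ k z 1 + I • fderiv ℝ k z I) = -((2 * π) • k 0) := by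
  let e (θ : ℝ) : ℂ := circleMap 0 1 θ
  let radial (p : ℝ × ℝ) : F := fderiv ℝ k (p.1 • e p.2) (e p.2)
  let angular (p : ℝ × ℝ) : F := fderiv ℝ k (p.1 • e p.2) (e p.2 * I)
  have he : Continuous e := continuous_circleMap 0 1
  have integrableOn_of {v : ℝ → ℂ} (hv : Continuous v) :=
    integrableOn_polarCoord_target_of_hasCompactSupport
      (hk.continuous_fderiv one_ne_zero) (hc.fderiv ℝ) hv
  have hradial : IntegrableOn radial polarCoord.target := integrableOn_of he
  have hangular : IntegrableOn angular polarCoord.target := integrableOn_of (he.mul_const I)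
  have integral_radial : ∫ p in polarCoord.target, radial p = -((2 * π) • k 0) := by
    rw [polarCoord_target, Measure.volume_eq_prod] at hradial ⊢
    have hswap : IntegrableOn (fun p => radial p.swap) (Ioo (-π) π ×ˢ Ioi 0)
        (volume.prod volume) := hradial.swap
    rw [← setIntegral_prod_swap, setIntegral_prod _ hswap]
    have (θ : ℝ) : ∫ r in Ioi 0, radial (r, θ) = -k 0 :=
      integral_Ioi_fderiv_smul hk hc (circleMap_ne_center one_ne_zero)
    simp [this, two_mul, Real.pi_pos.le]
  have integral_angular : ∫ p in polarCoord.target, angular p = 0 := by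
    rw [polarCoord_target, Measure.volume_eq_prod] at hangular ⊢
    rw [setIntegral_prod _ hangular]
    exact setIntegral_eq_zero_of_forall_eq_zero fun r hr =>
      integral_fderiv_smul_circleMap hk (ne_of_gt hr)
  have polar : ∀ p ∈ polarCoord.target, p.1 • ((p.1 • e p.2)⁻¹ •
      (fderiv ℝ k (p.1 • e p.2) 1 + I • fderiv ℝ k (p.1 • e p.2) I)) =
        radial p + I • angular p := by
    intro p hp
    have hp : p.1 ≠ 0 := ne_of_gt hp.1
    have he : ‖e p.2‖ = 1 := by simp [e]
    rw [smul_inv₀, smul_assoc, smul_inv_smul₀ hp, smul_map_one_add_I_smul_map_I _ he]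
  simp_rw [← Complex.integral_comp_polarCoord_symm, polarCoord_symm_eq_smul_circleMap]
  rw [setIntegral_congr_fun polarCoord.open_target.measurableSet polar,
    integral_add hradial (hangular.fun_smul I), integral_smul, integral_radial, integral_angular,
    smul_zero, add_zero]

end CauchyPompeiu

section ConvolutionAlong

open Function Topology
open scoped Convolution

lemma locallyIntegrable_map_of_isClosedEmbedding {X Y G : Type*} [TopologicalSpace X]
    [TopologicalSpace Y] [MeasurableSpace X] [MeasurableSpace Y] [BorelSpace X] [BorelSpace Y]
    [NormedAddCommGroup G] {e : X → Y} (he : IsClosedEmbedding e) {μ : Measure X} {f : Y → G}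
    (hf : LocallyIntegrable (f ∘ e) μ) : LocallyIntegrable f (μ.map e) := by
  intro y
  by_cases hy : y ∈ Set.range e
  · obtain ⟨x, rfl⟩ := hy
    obtain ⟨s, hs, hfs⟩ := hf x
    obtain ⟨t, ht, hts⟩ := he.isInducing.nhds_eq_comap x ▸ hs
    exact ⟨t, ht, he.measurableEmbedding.integrableOn_map_iff.2 (hfs.mono_set hts)⟩
  · refine ⟨(Set.range e)ᶜ, he.isClosed_range.isOpen_compl.mem_nhds hy, ?_⟩
    rw [he.measurableEmbedding.integrableOn_map_iff]
    simp

lemma fderiv_convolution_right_apply {G E E' F : Type*} [NormedAddCommGroup G] [NormedSpace ℝ G]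
    [MeasurableSpace G] [BorelSpace G] [NormedAddCommGroup E] [NormedSpace ℝ E]
    [NormedAddCommGroup E'] [NormedSpace ℝ E'] [NormedAddCommGroup F] [NormedSpace ℝ F]
    (L : E →L[ℝ] E' →L[ℝ] F) {μ : Measure G} {f : G → E} {g : G → E'}
    (hf : LocallyIntegrable f μ) (hg : ContDiff ℝ 1 g) (hc : HasCompactSupport g) (x v : G) :
    fderiv ℝ (f ⋆[L, μ] g) x v = (f ⋆[L, μ] fun y => fderiv ℝ g y v) x := by
  -- Mathlib differentiates convolutions against a general measure only when the right factor
  -- depends on a parameter, so a dummy parameter in `ℝ` is added and then frozen at `0`.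
  let g' (y : G) : ℝ × G →L[ℝ] E' := (fderiv ℝ g y).comp (ContinuousLinearMap.snd ℝ ℝ G)
  have hcont : Continuous g' := (hg.continuous_fderiv one_ne_zero).clm_comp continuous_const
  have hsupp : HasCompactSupport g' := (hc.fderiv ℝ).comp_left
    (g := fun A : G →L[ℝ] E' => A.comp (ContinuousLinearMap.snd ℝ ℝ G))
    (ContinuousLinearMap.zero_comp _)
  have hg' (y : G) : fderiv ℝ (fun q : ℝ × G => g q.2) (0, y) = g' y :=
    ((hg.differentiable one_ne_zero y).hasFDerivAt.comp (g := g) ((0 : ℝ), y)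
      hasFDerivAt_snd).fderiv
  have hparam : HasFDerivAt (fun q : ℝ × G => (f ⋆[L, μ] g) q.2)
      ((f ⋆[L.precompR (ℝ × G), μ] g') x) (0, x) := by
    simpa only [Function.HasUncurry.uncurry, id, hg'] using
      hasFDerivAt_convolution_right_with_param L (g := fun _ : ℝ => g) isOpen_univ
        hc.isCompact (fun _ _ _ => image_eq_zero_of_notMem_tsupport) hf
        (hg.comp contDiff_snd).contDiffOn (0, x) trivial
  have hslice : HasFDerivAt (f ⋆[L, μ] g) _ x := hparam.comp x (hasFDerivAt_prodMk_right 0 x)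
  rw [hslice.fderiv]
  exact convolution_precompR_apply L hf hsupp hcont x (0, v)

variable {V E F : Type*} [TopologicalSpace V] [MeasurableSpace V] [BorelSpace V]
  [NormedAddCommGroup E] [NormedAddCommGroup F] [NormedSpace ℂ F]
  {ι : V → E} {κ : V → ℂ} {μ : Measure V} {h : E → F}

/-- The partial convolution `∫ κ(v) h(x - ι v) dμ(v)` of `h` with a kernel `κ` carried by the
subset parametrised by `ι`. -/
def convolutionAlong (ι : V → E) (κ : V → ℂ) (μ : Measure V) (h : E → F) (x : E) : F :=
  ∫ v, κ v • h (x - ι v) ∂μ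

lemma integrable_smul_comp_sub [T2Space V] (hι : IsClosedEmbedding ι)
    (hκ : LocallyIntegrable κ μ) (hh : Continuous h) (hc : HasCompactSupport h) (x : E) :
    Integrable (fun v => κ v • h (x - ι v)) μ :=
  hκ.integrable_smul_right_of_hasCompactSupport (by have := hι.continuous; fun_prop)
    (hc.comp_isClosedEmbedding ((Homeomorph.subLeft x).isClosedEmbedding.comp hι))

lemma locallyIntegrable_extend_map [MeasurableSpace E] [BorelSpace E] (hι : IsClosedEmbedding ι)
    (hκ : LocallyIntegrable κ μ) : LocallyIntegrable (extend ι κ 0) (μ.map ι) :=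
  locallyIntegrable_map_of_isClosedEmbedding hι
    (by simpa [comp_def, hι.injective.extend_apply] using hκ)

lemma convolutionAlong_eq_convolution [MeasurableSpace E] [BorelSpace E]
    (hι : IsClosedEmbedding ι) :
    convolutionAlong ι κ μ h =
      extend ι κ 0 ⋆[ContinuousLinearMap.lsmul ℝ ℂ, μ.map ι] h := by
  funext x
  simp [convolutionAlong, convolution_def, hι.measurableEmbedding.integral_map,
    hι.injective.extend_apply]

variable [NormedSpace ℝ E]

lemma contDiff_convolutionAlong (hι : IsClosedEmbedding ι) (hκ : LocallyIntegrable κ μ) {n : ℕ∞}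
    (hh : ContDiff ℝ n h) (hc : HasCompactSupport h) :
    ContDiff ℝ n (convolutionAlong ι κ μ h) := by
  borelize E
  rw [convolutionAlong_eq_convolution hι]
  exact hc.contDiff_convolution_right _ (locallyIntegrable_extend_map hι hκ) hh

lemma fderiv_convolutionAlong_apply (hι : IsClosedEmbedding ι) (hκ : LocallyIntegrable κ μ)
    (hh : ContDiff ℝ 1 h) (hc : HasCompactSupport h) (x v : E) :
    fderiv ℝ (convolutionAlong ι κ μ h) x v =
      convolutionAlong ι κ μ (fun y => fderiv ℝ h y v) x := by
  borelize E
  simp only [convolutionAlong_eq_convolution hι]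
  exact fderiv_convolution_right_apply _ (locallyIntegrable_extend_map hι hκ) hh hc x v

end ConvolutionAlong

section CauchyTransform

open Topology Complex
open scoped Real

variable {E F : Type*} [NormedAddCommGroup E] [NormedSpace ℝ E] [NormedAddCommGroup F]
  [NormedSpace ℂ F] {ι : ℂ →L[ℝ] E} {h : E → F}

/-- The Cauchy transform of `h` along the plane `ι`, a right inverse of the Wirtinger operator
`∂ + i ∂` in the directions `ι 1` and `ι i`. -/
def cauchyTransform (ι : ℂ →L[ℝ] E) (h : E → F) : E → F :=
  (2 * π)⁻¹ • convolutionAlong ι (fun z => z⁻¹) volume h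

lemma contDiff_cauchyTransform (hι : IsClosedEmbedding ι) {n : ℕ∞} (hh : ContDiff ℝ n h)
    (hc : HasCompactSupport h) : ContDiff ℝ n (cauchyTransform ι h) :=
  (contDiff_convolutionAlong hι locallyIntegrable_complex_inv hh hc).const_smul _

lemma fderiv_cauchyTransform_apply (hι : IsClosedEmbedding ι) (hh : ContDiff ℝ 1 h)
    (hc : HasCompactSupport h) (x v : E) :
    fderiv ℝ (cauchyTransform ι h) x v = cauchyTransform ι (fun y => fderiv ℝ h y v) x := by
  have hdiff := (contDiff_convolutionAlong hι locallyIntegrable_complex_inv hh hc).differentiable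
    one_ne_zero x
  rw [cauchyTransform, fderiv_const_smul hdiff, smul_apply,
    fderiv_convolutionAlong_apply hι locallyIntegrable_complex_inv hh hc]
  rfl

lemma integral_inv_smul_fderiv_comp_sub [CompleteSpace F] (hι : IsClosedEmbedding ι)
    (hh : ContDiff ℝ 1 h) (hc : HasCompactSupport h) (x : E) :
    ∫ z : ℂ, z⁻¹ • (fderiv ℝ h (x - ι z) (ι 1) + I • fderiv ℝ h (x - ι z) (ι I)) =
      (2 * π) • h x := by
  let k (z : ℂ) : F := h (x - ι z)
  have hk : ContDiff ℝ 1 k := hh.comp (contDiff_const.sub ι.contDiff)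
  have hkc : HasCompactSupport k :=
    hc.comp_isClosedEmbedding ((Homeomorph.subLeft x).isClosedEmbedding.comp hι)
  have hfderiv_k (z v : ℂ) : fderiv ℝ k z v = -fderiv ℝ h (x - ι z) (ι v) := by
    have : HasFDerivAt k _ z := (hh.differentiable one_ne_zero _).hasFDerivAt.comp z
      (ι.hasFDerivAt.const_sub x)
    simp [this.fderiv]
  have hpompeiu := integral_inv_smul_fderiv_one_add_I_smul_fderiv_I hk hkc
  simp only [hfderiv_k, smul_neg, ← neg_add, integral_neg, neg_inj] at hpompeiu
  simpa [k] using hpompeiu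

theorem fderiv_cauchyTransform_one_add_I_smul [CompleteSpace F] (hι : IsClosedEmbedding ι)
    (hh : ContDiff ℝ 1 h) (hc : HasCompactSupport h) (x : E) :
    fderiv ℝ (cauchyTransform ι h) x (ι 1) + I • fderiv ℝ (cauchyTransform ι h) x (ι I) = h x := by
  have hint (v : E) : Integrable fun z : ℂ => z⁻¹ • fderiv ℝ h (x - ι z) v :=
    integrable_smul_comp_sub hι locallyIntegrable_complex_inv
      ((hh.continuous_fderiv one_ne_zero).clm_apply continuous_const) (hc.fderiv_apply ℝ v) x
  have hpompeiu := integral_inv_smul_fderiv_comp_sub hι hh hc x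
  simp only [smul_add, smul_comm _ I] at hpompeiu
  rw [integral_add (hint _) ((hint _).fun_smul I), integral_smul] at hpompeiu
  rw [fderiv_cauchyTransform_apply hι hh hc, fderiv_cauchyTransform_apply hι hh hc]
  simp only [cauchyTransform, convolutionAlong, Pi.smul_apply]
  rw [smul_comm I, ← smul_add, hpompeiu, inv_smul_smul₀ (by positivity)]

end CauchyTransform

open Complex in
theorem exists_fderiv_add_eq_and_fderiv_eq {E : Type*} [NormedAddCommGroup E] [NormedSpace ℝ E]
    {h : E → ℝ} (hh : ContDiff ℝ (⊤ : ℕ∞) h) (hc : HasCompactSupport h) {u v : E}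
    (huv : LinearIndependent ℝ ![u, v]) :
    ∃ p q : E → ℝ, ContDiff ℝ (⊤ : ℕ∞) p ∧ ContDiff ℝ (⊤ : ℕ∞) q ∧
      (∀ x, fderiv ℝ p x u + fderiv ℝ q x v = h x) ∧ ∀ x, fderiv ℝ p x v = fderiv ℝ q x u := by
  let ι : ℂ →L[ℝ] E := reCLM.smulRight u + imCLM.smulRight v
  have hι : Topology.IsClosedEmbedding ι := by
    refine LinearMap.isClosedEmbedding_of_injective (f := (ι : ℂ →ₗ[ℝ] E)) <|
      LinearMap.ker_eq_bot'.2 fun z hz => ?_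
    obtain ⟨hre, him⟩ := LinearIndependent.pair_iff.1 huv z.re z.im hz
    exact Complex.ext hre him
  let h' (x : E) : ℂ := h x
  have hh' : ContDiff ℝ (⊤ : ℕ∞) h' := ofRealCLM.contDiff.comp hh
  have hc' : HasCompactSupport h' := hc.comp_left ofReal_zero
  let w : E → ℂ := cauchyTransform ι h'
  have hw : ContDiff ℝ (⊤ : ℕ∞) w := contDiff_cauchyTransform hι hh' hc'
  have hwirtinger (x : E) : fderiv ℝ w x u + I * fderiv ℝ w x v = h x := by
    simpa [ι] using fderiv_cauchyTransform_one_add_I_smul hι (hh'.of_le (by simp)) hc' x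
  have hre (x y : E) : fderiv ℝ (fun x => (w x).re) x y = (fderiv ℝ w x y).re :=
    congrArg (· y) (reCLM.hasFDerivAt.comp x (hw.differentiable (by simp) x).hasFDerivAt).fderiv
  have him (x y : E) : fderiv ℝ (fun x => -(w x).im) x y = -(fderiv ℝ w x y).im :=
    congrArg (· y)
      (imCLM.hasFDerivAt.comp x (hw.differentiable (by simp) x).hasFDerivAt).neg.fderiv
  refine ⟨fun x => (w x).re, fun x => -(w x).im, reCLM.contDiff.comp hw,
    (imCLM.contDiff.comp hw).neg, fun x => ?_, fun x => ?_⟩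
  · have := congrArg re (hwirtinger x)
    rw [hre, him]
    simpa [sub_eq_add_neg] using this
  · have : (fderiv ℝ w x v).re + (fderiv ℝ w x u).im = 0 := by
      simpa [add_comm] using congrArg im (hwirtinger x)
    rw [hre, him]
    exact eq_neg_of_add_eq_zero_left this

section BilaplacianPotential

variable {k ι M : Type*} [Field k] [AddCommGroup M] [Module k M] [Fintype ι]
  {D : ι → Module.End k M}

/-- The Laplacian `∑ᵢ ∂ᵢ²` of a family `D` of abstract partial derivatives. -/
def laplacian (D : ι → Module.End k M) : Module.End k M := ∑ i, D i * D i

/-- The divergence `∑ᵢ ∂ᵢ fᵢ` for a family `D` of abstract partial derivatives. -/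
def divergence (D : ι → Module.End k M) (f : ι → M) : M := ∑ i, D i (f i)

lemma commute_laplacian (hD : ∀ i j, Commute (D i) (D j)) (i : ι) :
    Commute (D i) (laplacian D) :=
  Commute.sum_right _ _ _ fun j _ => (hD i j).mul_right (hD i j)

lemma map_laplacian_eq_zero {N : Type*} [AddCommGroup N] [Module k N] {φ : M →ₗ[k] N}
    (hφ : ∀ i m, φ (D i m) = 0) (m : M) : φ (laplacian D m) = 0 := by
  simp [laplacian, LinearMap.sum_apply, hφ]

variable [DecidableEq ι]

/-- A symmetric trace-free matrix whose divergence is the bi-Laplacian of `f`. Writing `n` for the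
dimension, the coefficients of `∂ᵢ∂ⱼ div f` and `δᵢⱼ Δ div f` are the ones that cancel both the
trace of `Δ(∂ᵢ fⱼ + ∂ⱼ fᵢ)` and the gradient part `∂ᵢ Δ div f` of its divergence. -/
def bilaplacianPotential (D : ι → Module.End k M) (f : ι → M) (i j : ι) : M :=
  laplacian D (D i (f j) + D j (f i)) -
    (((Fintype.card ι : k) - 2) / ((Fintype.card ι : k) - 1)) • D i (D j (divergence D f)) -
    if i = j then ((Fintype.card ι : k) - 1)⁻¹ • laplacian D (divergence D f) else 0

lemma bilaplacianPotential_comm (hD : ∀ i j, Commute (D i) (D j)) (f : ι → M)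
    (i j : ι) : bilaplacianPotential D f i j = bilaplacianPotential D f j i := by
  rcases eq_or_ne i j with rfl | hne
  · rfl
  · have hcomm : D i (D j (divergence D f)) = D j (D i (divergence D f)) :=
      LinearMap.congr_fun (hD i j).eq _
    simp [bilaplacianPotential, hcomm, hne, hne.symm, add_comm]

lemma sum_bilaplacianPotential_diag (hn : (Fintype.card ι : k) ≠ 1) (f : ι → M) :
    ∑ i, bilaplacianPotential D f i i = 0 := by
  have hsum : ∑ i, laplacian D (D i (f i)) = laplacian D (divergence D f) := by
    simp only [divergence, map_sum]
  have hlap : ∑ i, D i (D i (divergence D f)) = laplacian D (divergence D f) := by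
    simp [laplacian, LinearMap.sum_apply]
  have hn' : (Fintype.card ι : k) - 1 ≠ 0 := sub_ne_zero.2 hn
  simp only [bilaplacianPotential, if_true, Finset.sum_sub_distrib, map_add,
    Finset.sum_add_distrib, ← Finset.smul_sum, hsum, hlap, Finset.sum_const, Finset.card_univ,
    ← Nat.cast_smul_eq_nsmul k]
  match_scalars
  field_simp
  ring

theorem divergence_bilaplacianPotential (hD : ∀ i j, Commute (D i) (D j))
    (hn : (Fintype.card ι : k) ≠ 1) (f : ι → M) (i : ι) :
    divergence D (bilaplacianPotential D f i) = laplacian D (laplacian D (f i)) := by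
  have comm_apply (j : ι) (m : M) : D j (laplacian D m) = laplacian D (D j m) :=
    LinearMap.congr_fun (commute_laplacian hD j).eq m
  have swap_apply (i j : ι) (m : M) : D i (D j m) = D j (D i m) :=
    LinearMap.congr_fun (hD i j).eq m
  have hgrad : ∑ j, D j (D i (f j)) = D i (divergence D f) := by
    simp only [divergence, map_sum, swap_apply i]
  have hlap (m : M) : ∑ j, D j (D j m) = laplacian D m := by
    simp [laplacian, LinearMap.sum_apply]
  have hmixed : ∑ j, D j (D i (D j (divergence D f))) = laplacian D (D i (divergence D f)) := by
    simp only [← hlap, swap_apply i]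
  have hn' : (Fintype.card ι : k) - 1 ≠ 0 := sub_ne_zero.2 hn
  have hdiag : ∑ j, D j (if i = j then ((Fintype.card ι : k) - 1)⁻¹ •
      laplacian D (divergence D f) else 0) =
      ((Fintype.card ι : k) - 1)⁻¹ • laplacian D (D i (divergence D f)) := by
    simp [apply_ite, comm_apply]
  rw [divergence]
  simp only [bilaplacianPotential, map_sub, map_add, map_smul, comm_apply, Finset.sum_sub_distrib,
    Finset.sum_add_distrib, ← Finset.smul_sum, hdiag, hmixed]
  rw [← map_sum, ← map_sum, hgrad, hlap]
  match_scalars <;> field_simp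
  ring

lemma map_bilaplacianPotential_eq_zero {N : Type*} [AddCommGroup N] [Module k N] {φ : M →ₗ[k] N}
    (hφ : ∀ i m, φ (D i m) = 0) (f : ι → M) (i j : ι) :
    φ (bilaplacianPotential D f i j) = 0 := by
  simp only [bilaplacianPotential, map_sub, map_smul, apply_ite φ, map_zero, hφ,
    map_laplacian_eq_zero hφ]
  simp

end BilaplacianPotential

section TestFunctions

open TopologicalSpace
open scoped Distributions

variable {E : Type*} [NormedAddCommGroup E] [NormedSpace ℝ E] {K : Compacts E}

/-- Differentiation in the direction `v`, on smooth functions supported in `K`. Fixing `K` makes it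
an endomorphism, so that support control comes for free. -/
def dirDeriv (K : Compacts E) (v : E) : Module.End ℝ 𝓓_{K}(E, ℝ) :=
  ContDiffMapSupportedIn.postcompLM (ContinuousLinearMap.apply ℝ ℝ v) ∘ₗ
    ContDiffMapSupportedIn.fderivLM ℝ ⊤ ⊤

lemma dirDeriv_apply (v : E) (g : 𝓓_{K}(E, ℝ)) (x : E) : dirDeriv K v g x = fderiv ℝ g x v := by
  simp [dirDeriv, ContDiffMapSupportedIn.postcompLM_apply]

lemma dirDeriv_dirDeriv_apply (v w : E) (g : 𝓓_{K}(E, ℝ)) (x : E) :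
    dirDeriv K v (dirDeriv K w g) x = fderiv ℝ (fderiv ℝ g) x v w := by
  have hdiff : DifferentiableAt ℝ (fderiv ℝ g) x :=
    (contDiff_infty_iff_fderiv.1 g.contDiff).2.differentiable (by simp) x
  have hw : ⇑(dirDeriv K w g) = fun y => fderiv ℝ g y w := funext (dirDeriv_apply w g)
  rw [dirDeriv_apply, hw, fderiv_clm_apply hdiff (differentiableAt_const w)]
  simp

lemma commute_dirDeriv (v w : E) : Commute (dirDeriv K v) (dirDeriv K w) := by
  refine LinearMap.ext fun g => ContDiffMapSupportedIn.ext fun x => ?_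
  rw [Module.End.mul_apply, Module.End.mul_apply, dirDeriv_dirDeriv_apply,
    dirDeriv_dirDeriv_apply]
  exact g.contDiff.contDiffAt.isSymmSndFDerivAt
    (by simpa using WithTop.coe_le_coe.2 (le_top (a := (2 : ℕ∞)))) v w

variable [MeasurableSpace E] [BorelSpace E]

lemma integrable_testFunction (μ : Measure E) [IsFiniteMeasureOnCompacts μ] (g : 𝓓_{K}(E, ℝ)) :
    Integrable g μ :=
  g.continuous.integrable_of_hasCompactSupport g.hasCompactSupport

/-- The integral, as a linear functional on the smooth functions supported in `K`. -/
def integralLM (K : Compacts E) (μ : Measure E) [IsFiniteMeasureOnCompacts μ] :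
    𝓓_{K}(E, ℝ) →ₗ[ℝ] ℝ where
  toFun g := ∫ x, g x ∂μ
  map_add' g₁ g₂ := integral_add (integrable_testFunction μ g₁) (integrable_testFunction μ g₂)
  map_smul' c g := integral_const_mul c g

lemma integralLM_dirDeriv [FiniteDimensional ℝ E] (μ : Measure E) [μ.IsAddHaarMeasure] (v : E)
    (g : 𝓓_{K}(E, ℝ)) : integralLM K μ (dirDeriv K v g) = 0 := by
  have parts := integral_mul_fderiv_eq_neg_fderiv_mul_of_integrable (𝕜 := ℝ) (μ := μ)
    (f := fun _ : E => (1 : ℝ)) (g := g) (v := v) (by simp)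
    (by simpa only [one_mul, ← dirDeriv_apply] using integrable_testFunction μ (dirDeriv K v g))
    (by simpa using integrable_testFunction μ g)
    (fun _ _ => by fun_prop) (fun x _ => g.contDiff.differentiable (by simp) x)
  simpa [integralLM, dirDeriv_apply] using parts

end TestFunctions

section Potentials

variable {d : ℕ}

/-- `U` is a smooth symmetric trace-free matrix field with `div U = f`. -/
structure IsSymmTraceFreePotential (U : Vec d → Mat d) (f : Vec d → Vec d) : Prop where
  contDiff : ∀ i j, ContDiff ℝ (⊤ : ℕ∞) fun x => U x i j
  symm : ∀ x i j, U x i j = U x j i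
  trace : ∀ x, ∑ i, U x i i = 0
  div : ∀ x i, ∑ j, pd j (fun y => U y i j) x = f x i

namespace IsSymmTraceFreePotential

lemma zero : IsSymmTraceFreePotential (0 : Vec d → Mat d) 0 where
  contDiff _ _ := contDiff_const
  symm _ _ _ := rfl
  trace _ := by simp
  div _ _ := by simp [pd]

lemma add {U₁ U₂ : Vec d → Mat d} {f₁ f₂ : Vec d → Vec d} (h₁ : IsSymmTraceFreePotential U₁ f₁)
    (h₂ : IsSymmTraceFreePotential U₂ f₂) : IsSymmTraceFreePotential (U₁ + U₂) (f₁ + f₂) where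
  contDiff i j := (h₁.contDiff i j).add (h₂.contDiff i j)
  symm x i j := congrArg₂ (· + ·) (h₁.symm x i j) (h₂.symm x i j)
  trace x := by simp [Finset.sum_add_distrib, h₁.trace, h₂.trace]
  div x i := by
    have hpd (j : Fin d) : pd j (fun y => (U₁ + U₂) y i j) x =
        pd j (fun y => U₁ y i j) x + pd j (fun y => U₂ y i j) x :=
      congrArg (· (Pi.single j 1)) <|
        fderiv_fun_add ((h₁.contDiff i j).differentiable (by simp) x)
          ((h₂.contDiff i j).differentiable (by simp) x)
    rw [Finset.sum_congr rfl fun j _ => hpd j, Finset.sum_add_distrib, h₁.div, h₂.div]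
    rfl

lemma smul_matrix {A : Matrix (Fin d) (Fin d) ℝ} (hA : A.IsSymm) (htr : A.trace = 0)
    {p : Vec d → ℝ} (hp : ContDiff ℝ (⊤ : ℕ∞) p) :
    IsSymmTraceFreePotential (fun x i j => p x * A i j)
      (fun x => A.mulVec fun j => pd j p x) where
  contDiff _ _ := hp.mul contDiff_const
  symm x i j := by rw [hA.apply]
  trace x := by
    rw [← Finset.mul_sum]
    exact mul_eq_zero_of_right (p x) htr
  div x i := by
    refine Finset.sum_congr rfl fun j _ => ?_
    rw [pd, fderiv_mul_const (hp.differentiable (by simp) x)]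
    rfl

end IsSymmTraceFreePotential

lemma exists_isSymmTraceFreePotential_of_pd_eq_pd {i j : Fin d} (hij : i ≠ j) {p q : Vec d → ℝ}
    (hp : ContDiff ℝ (⊤ : ℕ∞) p) (hq : ContDiff ℝ (⊤ : ℕ∞) q)
    (hpq : ∀ x, pd j p x = pd i q x) :
    ∃ U, IsSymmTraceFreePotential U fun x => Pi.single i (pd i p x + pd j q x) := by
  have hA := IsSymmTraceFreePotential.smul_matrix (A := .single i i 1 - .single j j 1)
    (by simp [Matrix.IsSymm]) (by simp) hp
  have hB := IsSymmTraceFreePotential.smul_matrix (A := .single i j 1 + .single j i 1)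
    (by simp [Matrix.IsSymm, add_comm]) (by simp [hij, hij.symm]) hq
  refine ⟨_, (congrArg (IsSymmTraceFreePotential _) (funext fun x => ?_)).mp (hA.add hB)⟩
  simp only [Pi.add_apply, Matrix.sub_mulVec, Matrix.add_mulVec, Matrix.single_mulVec_eq, hpq,
    one_mul, ← Pi.single_smul', smul_eq_mul, mul_one, Pi.single_add]
  abel

lemma exists_isSymmTraceFreePotential_sum {α : Type*} (s : Finset α) {f : α → Vec d → Vec d}
    (hf : ∀ a ∈ s, ∃ U, IsSymmTraceFreePotential U (f a)) :
    ∃ U, IsSymmTraceFreePotential U (∑ a ∈ s, f a) :=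
  Finset.sum_induction f (fun g => ∃ U, IsSymmTraceFreePotential U g)
    (fun _ _ ⟨_, h₁⟩ ⟨_, h₂⟩ => ⟨_, h₁.add h₂⟩) ⟨_, .zero⟩ hf

lemma linearIndependent_single_pair {i j : Fin d} (hij : i ≠ j) :
    LinearIndependent ℝ ![(Pi.single i 1 : Vec d), Pi.single j 1] := by
  refine LinearIndependent.pair_iff.2 fun s t hst => ⟨?_, ?_⟩
  · simpa [hij] using congrFun hst i
  · simpa [hij.symm] using congrFun hst j

lemma exists_isSymmTraceFreePotential_single {i j : Fin d} (hij : i ≠ j) {h : Vec d → ℝ}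
    (hh : ContDiff ℝ (⊤ : ℕ∞) h) (hc : HasCompactSupport h) :
    ∃ U, IsSymmTraceFreePotential U fun x => Pi.single i (h x) := by
  obtain ⟨p, q, hp, hq, hdiv, hcurl⟩ := exists_fderiv_add_eq_and_fderiv_eq hh hc
    (u := Pi.single i 1) (v := Pi.single j 1)
    (linearIndependent_single_pair hij)
  obtain ⟨U, hU⟩ := exists_isSymmTraceFreePotential_of_pd_eq_pd hij hp hq hcurl
  exact ⟨U, by simpa only [pd, hdiv] using hU⟩

theorem exists_isSymmTraceFreePotential (hd : 2 ≤ d) {f : Vec d → Vec d}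
    (hf : ContDiff ℝ (⊤ : ℕ∞) f) (hc : HasCompactSupport f) :
    ∃ U, IsSymmTraceFreePotential U f := by
  have : Nontrivial (Fin d) := Fin.nontrivial_iff_two_le.2 hd
  have hsum : f = ∑ i, fun x => Pi.single i (f x i) := by
    funext x
    simp [Finset.sum_apply, Finset.univ_sum_single]
  rw [hsum]
  refine exists_isSymmTraceFreePotential_sum _ fun i _ => ?_
  obtain ⟨j, hj⟩ := exists_ne i
  exact exists_isSymmTraceFreePotential_single hj.symm (contDiff_pi.1 hf i)
    (hc.comp_left (g := fun v : Vec d => v i) rfl)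

section TestFunctions

open scoped Distributions

variable {K : TopologicalSpace.Compacts (Vec d)} (g : 𝓓_{K}(Vec d, ℝ))

lemma dirDeriv_single_apply (i : Fin d) (x : Vec d) :
    dirDeriv K (Pi.single i 1) g x = pd i g x :=
  dirDeriv_apply _ g x

lemma divergence_dirDeriv_single_apply (f : Fin d → 𝓓_{K}(Vec d, ℝ)) (x : Vec d) :
    divergence (fun i => dirDeriv K (Pi.single i 1)) f x = ∑ i, pd i (f i) x := by
  simp [divergence, dirDeriv_single_apply]

lemma laplacian_dirDeriv_single_apply (x : Vec d) :
    laplacian (fun i => dirDeriv K (Pi.single i 1)) g x = lap g x := by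
  simp [laplacian, LinearMap.sum_apply, lap, ← dirDeriv_single_apply]

lemma laplacian_laplacian_dirDeriv_single_apply (x : Vec d) :
    laplacian (fun i => dirDeriv K (Pi.single i 1))
      (laplacian (fun i => dirDeriv K (Pi.single i 1)) g) x = bilap g x := by
  simp only [bilap, ← laplacian_dirDeriv_single_apply]

end TestFunctions

open scoped Distributions in
theorem exists_isSymmTraceFreePotential_bilap (hd : 2 ≤ d) {f : Vec d → Vec d}
    (hf : ContDiff ℝ (⊤ : ℕ∞) f) (hc : HasCompactSupport f) :
    ∃ V, IsSymmTraceFreePotential V (fun x i => bilap (fun y => f y i) x) ∧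
      (∀ i j, tsupport (fun x => V x i j) ⊆ tsupport f) ∧ ∀ i j, ∫ x, V x i j = 0 := by
  let K : TopologicalSpace.Compacts (Vec d) := ⟨tsupport f, hc⟩
  let D (i : Fin d) := dirDeriv K (Pi.single i 1 : Vec d)
  have hD (i j : Fin d) : Commute (D i) (D j) := commute_dirDeriv _ _
  have hcard : (Fintype.card (Fin d) : ℝ) ≠ 1 := by
    rw [Fintype.card_fin]
    exact_mod_cast (Nat.lt_of_succ_le hd).ne'
  let F (i : Fin d) : 𝓓_{K}(Vec d, ℝ) := .of_support_subset (contDiff_pi.1 hf i)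
    ((Function.support_comp_subset (g := fun v : Vec d => v i) rfl f).trans (subset_tsupport f))
  let V (i j : Fin d) : 𝓓_{K}(Vec d, ℝ) := bilaplacianPotential D F i j
  refine ⟨fun x i j => V i j x, ⟨fun i j => (V i j).contDiff, fun x i j => ?_, fun x => ?_,
    fun x i => ?_⟩, fun i j => (V i j).tsupport_subset, fun i j => ?_⟩
  · exact DFunLike.congr_fun (bilaplacianPotential_comm hD F i j) x
  · simpa using DFunLike.congr_fun (sum_bilaplacianPotential_diag (D := D) hcard F) x
  · have hdiv := DFunLike.congr_fun (divergence_bilaplacianPotential hD hcard F i) x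
    rwa [divergence_dirDeriv_single_apply, laplacian_laplacian_dirDeriv_single_apply] at hdiv
  · exact map_bilaplacianPotential_eq_zero (φ := integralLM K volume)
      (fun i => integralLM_dirDeriv volume _) F i j

end Potentials

/-- **Lemma 3.2.** Let `d ≥ 2`.
(i) For every `f ∈ C_c^∞(ℝ^d; ℝ^d)` there is a smooth symmetric trace-free matrix field `U`
with `div U = f`.
(ii) Moreover, there is a smooth symmetric trace-free matrix field `V` with `div V = Δ²f`,
`supp V ⊆ supp f` and `∫ V = 0`. -/
theorem stmt3 (d : ℕ) (hd : 2 ≤ d) :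
    (∀ f : Vec d → Vec d, ContDiff ℝ (⊤ : ℕ∞) f → HasCompactSupport f →
      ∃ U : Vec d → Mat d,
        (∀ i j, ContDiff ℝ (⊤ : ℕ∞) (fun x => U x i j)) ∧
        (∀ x i j, U x i j = U x j i) ∧
        (∀ x, ∑ i, U x i i = 0) ∧
        (∀ x i, ∑ j, pd j (fun y => U y i j) x = f x i)) ∧
    (∀ f : Vec d → Vec d, ContDiff ℝ (⊤ : ℕ∞) f → HasCompactSupport f →
      ∃ V : Vec d → Mat d,
        (∀ i j, ContDiff ℝ (⊤ : ℕ∞) (fun x => V x i j)) ∧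
        (∀ x i j, V x i j = V x j i) ∧
        (∀ x, ∑ i, V x i i = 0) ∧
        (∀ x i, ∑ j, pd j (fun y => V y i j) x = bilap (fun y => f y i) x) ∧
        (∀ i j, tsupport (fun x => V x i j) ⊆ tsupport f) ∧
        (∀ i j, (∫ x, V x i j) = 0)) := by
  refine ⟨fun f hf hc => ?_, fun f hf hc => ?_⟩
  · obtain ⟨U, hU⟩ := exists_isSymmTraceFreePotential hd hf hc
    exact ⟨U, hU.contDiff, hU.symm, hU.trace, hU.div⟩
  · obtain ⟨V, hV, hsupp, hint⟩ := exists_isSymmTraceFreePotential_bilap hd hf hc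
    exact ⟨V, hV.contDiff, hV.symm, hV.trace, hV.div, hsupp, hint⟩
end
end

section
/- Let d ≥ 2 and let B be a fixed real d×d matrix. Let w₁, w₂ ∈ ℝ^d × S₀^{d×d} and μ₁, μ₂ > 0 with μ₁ + μ₂ = 1 be such that w̄ := w₂ − w₁ ∈ Λ, and set w := μ₁w₁ + μ₂w₂. Then for every bounded open set O ⊂ ℝ^d and every ε > 0 there exist w̃ = (ṽ, Ũ) ∈ C_c^∞(O; ℝ^d × S₀^{d×d}) and q ∈ C_c^∞(O) with div Ũ + ∇q = Bṽ and div ṽ = 0 on ℝ^d, such that: (a) dist(w + w̃(x), [w₁, w₂]) < ε for all x ∈ O, where [w₁,w₂] is the closed segment joining w₁ and w₂; (b) there exist disjoint open subsets O₁, O₂ ⊂ O such that for i = 1, 2, |w + w̃(x) − w_i| < ε for all x ∈ O_i, and ||O_i| − μ_i|O|| < ε, where |·| denotes d-dimensional Lebesgue measure. -/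
open MeasureTheory

noncomputable section

/-- The space S₀^{d×d} of symmetric trace-free d×d matrices, as a submodule. -/
def S0 (d : ℕ) : Submodule ℝ (Mat d) where
  carrier := {U | (∀ i j, U i j = U j i) ∧ ∑ i, U i i = 0}
  add_mem' := by
    rintro U V ⟨hU1, hU2⟩ ⟨hV1, hV2⟩
    refine ⟨fun i j => by simp [hU1 i j, hV1 i j], ?_⟩
    simp [Finset.sum_add_distrib, hU2, hV2]
  zero_mem' := ⟨fun i j => rfl, by simp⟩
  smul_mem' := by
    rintro c U ⟨hU1, hU2⟩
    refine ⟨fun i j => by simp [hU1 i j], ?_⟩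
    simp [← Finset.mul_sum, hU2]

/-- The wave cone Λ: states `(v̄, Ū)` with `v̄ ≠ 0` for which there are `q̄ ∈ ℝ` and
`ξ ≠ 0` with `Ū ξ + q̄ ξ = 0` and `v̄ · ξ = 0`. -/
def Lam (d : ℕ) : Set (Vec d × S0 d) :=
  {w | w.1 ≠ 0 ∧ ∃ (q : ℝ) (ξ : Vec d), ξ ≠ 0 ∧
    (∀ i, (∑ j, (w.2 : Mat d) i j * ξ j) + q * ξ i = 0) ∧ (∑ i, w.1 i * ξ i = 0)}

/-!
For a direction in the wave cone with covector `ξ` there is a differential operator `L` with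
constant coefficients, of order at most two, mapping every scalar potential to a subsolution, and
the second-order part of `L` maps `h''(ξ · x)` profiles to multiples of that direction. Apply `L`
to the wave packet `N⁻² φ(x) H(N ξ · x)`, where `φ` is a cutoff of `O` and `h = H''` is smooth and
`1`-periodic with mean zero, equal up to small errors to `-μ₂` on a fraction `μ₁` of its period and
to `μ₁` on the remaining fraction `μ₂`. Up to `O(N⁻¹)`, adding `w = μ₁ w₁ + μ₂ w₂` gives
`w₁ + (μ₂ + φ h) (w₂ - w₁)`, which is near the segment, and near `w₁` or `w₂` where `φ` is near `1`
and `h` is near `-μ₂` or `μ₁`. As `N → ∞` the phase `N ξ · x` equidistributes modulo one, so these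
sets have nearly the prescribed volumes.
-/

open Filter Topology Set

lemma contDiff_infty_of_hasDerivAt {F f : ℝ → ℝ} (hf : ContDiff ℝ (⊤ : ℕ∞) f)
    (hF : ∀ t, HasDerivAt F (f t) t) : ContDiff ℝ (⊤ : ℕ∞) F := by
  refine contDiff_infty_iff_deriv.2 ⟨fun t => (hF t).differentiableAt, ?_⟩
  rwa [funext fun t => (hF t).deriv]

lemma exists_abs_le_of_periodic_of_continuous {f : ℝ → ℝ} {T : ℝ}
    (hp : Function.Periodic f T) (hT : T ≠ 0) (hf : Continuous f) : ∃ C, ∀ t, |f t| ≤ C := by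
  obtain ⟨C, hC⟩ := (hp.isBounded_of_continuous hT hf).exists_norm_le
  exact ⟨C, fun t => hC _ ⟨t, rfl⟩⟩

lemma exists_periodic_primitive {f : ℝ → ℝ} (hf : Continuous f) (hp : Function.Periodic f 1)
    (h0 : ∫ t in (0 : ℝ)..1, f t = 0) :
    ∃ F : ℝ → ℝ, Function.Periodic F 1 ∧ (∫ t in (0 : ℝ)..1, F t = 0) ∧
      ∀ t, HasDerivAt F (f t) t := by
  have hint : ∀ a b, IntervalIntegrable f volume a b := hf.intervalIntegrable
  set G : ℝ → ℝ := fun t => ∫ s in (0 : ℝ)..t, f s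
  have hG : ∀ t, HasDerivAt G (f t) t := fun t =>
    intervalIntegral.integral_hasDerivAt_right (hint 0 t) (hf.stronglyMeasurableAtFilter _ _)
      hf.continuousAt
  have hGp : Function.Periodic G 1 := fun t => by
    simp only [G]
    rw [← intervalIntegral.integral_add_adjacent_intervals (hint 0 t) (hint t (t + 1)),
      hp.intervalIntegral_add_eq t 0, zero_add, h0, add_zero]
  have hGc : Continuous G := continuous_iff_continuousAt.2 fun t => (hG t).continuousAt
  refine ⟨fun t => G t - ∫ s in (0 : ℝ)..1, G s, fun t => by simp only [hGp t], ?_,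
    fun t => (hG t).sub_const _⟩
  rw [intervalIntegral.integral_sub (hGc.intervalIntegrable _ _) intervalIntegrable_const]
  simp

lemma tendsto_smoothTransition_nat_mul (s : ℝ) :
    Tendsto (fun n : ℕ => Real.smoothTransition (n * s)) atTop
      (𝓝 ((Ioi 0).indicator (fun _ => 1) s)) := by
  rcases lt_or_ge 0 s with hs | hs
  · rw [indicator_of_mem (mem_Ioi.2 hs)]
    refine tendsto_const_nhds.congr' ?_
    filter_upwards [(tendsto_natCast_atTop_atTop.atTop_mul_const hs).eventually_ge_atTop 1]
      with n hn using (Real.smoothTransition.one_of_one_le hn).symm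
  · rw [indicator_of_notMem (notMem_Ioi.2 hs)]
    exact tendsto_const_nhds.congr fun n => (Real.smoothTransition.zero_of_nonpos
      (mul_nonpos_of_nonneg_of_nonpos n.cast_nonneg hs)).symm

/-- A smooth `1`-periodic approximation, as `n → ∞`, of the indicator of the periodic set which
meets `[0, 1]` in the centred interval of length `μ`. -/
def smoothPulse (μ : ℝ) (n : ℕ) (t : ℝ) : ℝ :=
  Real.smoothTransition (n * (-Real.cos (2 * Real.pi * t) - Real.cos (Real.pi * μ)))

namespace smoothPulse

variable (μ : ℝ) (n : ℕ)

protected lemma contDiff : ContDiff ℝ (⊤ : ℕ∞) (smoothPulse μ n) :=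
  Real.smoothTransition.contDiff.comp (by fun_prop)

protected lemma continuous : Continuous (smoothPulse μ n) :=
  (smoothPulse.contDiff μ n).continuous

protected lemma periodic : Function.Periodic (smoothPulse μ n) 1 := fun t => by
  rw [smoothPulse, mul_add, mul_one, Real.cos_add_two_pi, smoothPulse]

lemma mem_Icc (t : ℝ) : smoothPulse μ n t ∈ Icc 0 1 :=
  ⟨Real.smoothTransition.nonneg _, Real.smoothTransition.le_one _⟩

end smoothPulse

lemma cos_pi_mul_lt_neg_cos_iff {μ t : ℝ} (h0 : 0 ≤ μ) (h1 : μ ≤ 1) (ht : t ∈ Icc (0 : ℝ) 1) :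
    Real.cos (Real.pi * μ) < -Real.cos (2 * Real.pi * t) ↔
      t ∈ Ioo ((1 - μ) / 2) ((1 + μ) / 2) := by
  have habs : |2 * t - 1| ≤ 1 := abs_le.2 ⟨by linarith [ht.1], by linarith [ht.2]⟩
  have hcos : -Real.cos (2 * Real.pi * t) = Real.cos (Real.pi * |2 * t - 1|) := by
    rw [← Real.cos_sub_pi, ← Real.cos_abs, show 2 * Real.pi * t - Real.pi
      = Real.pi * (2 * t - 1) by ring, abs_mul, abs_of_pos Real.pi_pos]
  have hmem : ∀ s : ℝ, 0 ≤ s → s ≤ 1 → Real.pi * s ∈ Icc 0 Real.pi := fun s hs0 hs1 =>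
    ⟨mul_nonneg Real.pi_pos.le hs0, mul_le_of_le_one_right Real.pi_pos.le hs1⟩
  rw [hcos, Real.strictAntiOn_cos.lt_iff_gt (hmem _ h0 h1) (hmem _ (abs_nonneg _) habs),
    mul_lt_mul_iff_right₀ Real.pi_pos, abs_lt, mem_Ioo]
  constructor <;> rintro ⟨_, _⟩ <;> constructor <;> linarith

lemma smoothPulse.tendsto {μ : ℝ} (h0 : 0 ≤ μ) (h1 : μ ≤ 1) {t : ℝ} (ht : t ∈ Icc (0 : ℝ) 1) :
    Tendsto (fun n => smoothPulse μ n t) atTop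
      (𝓝 ((Ioo ((1 - μ) / 2) ((1 + μ) / 2)).indicator (fun _ => 1) t)) := by
  have hind : (Ioo ((1 - μ) / 2) ((1 + μ) / 2)).indicator (fun _ => (1 : ℝ)) t = (Ioi 0).indicator
      (fun _ => 1) (-Real.cos (2 * Real.pi * t) - Real.cos (Real.pi * μ)) := by
    simp only [indicator, mem_Ioi, sub_pos, cos_pi_mul_lt_neg_cos_iff h0 h1 ht]
  rw [hind]
  exact tendsto_smoothTransition_nat_mul _

lemma tendsto_intervalIntegral_of_forall_abs_le {F : ℕ → ℝ → ℝ} {f : ℝ → ℝ} {a b C : ℝ}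
    (hab : a ≤ b) (hF : ∀ n, Continuous (F n)) (hC : ∀ n t, |F n t| ≤ C)
    (hlim : ∀ t ∈ Icc a b, Tendsto (fun n => F n t) atTop (𝓝 (f t))) :
    Tendsto (fun n => ∫ t in a..b, F n t) atTop (𝓝 (∫ t in a..b, f t)) :=
  intervalIntegral.tendsto_integral_filter_of_dominated_convergence (fun _ => C)
    (Eventually.of_forall fun n => (hF n).aestronglyMeasurable)
    (Eventually.of_forall fun n => Eventually.of_forall fun t _ => hC n t)
    intervalIntegrable_const
    (Eventually.of_forall fun t ht => hlim t (by
      rw [uIoc_of_le hab] at ht; exact Ioc_subset_Icc_self ht))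

lemma smoothPulse.tendsto_integral {μ : ℝ} (h0 : 0 ≤ μ) (h1 : μ ≤ 1) :
    Tendsto (fun n => ∫ t in (0 : ℝ)..1, smoothPulse μ n t) atTop (𝓝 μ) := by
  have hsub : Ioo ((1 - μ) / 2) ((1 + μ) / 2) ⊆ Ioc (0 : ℝ) 1 := fun t ht =>
    ⟨by linarith [ht.1], by linarith [ht.2]⟩
  have hμ : ∫ t in (0 : ℝ)..1, (Ioo ((1 - μ) / 2) ((1 + μ) / 2)).indicator (fun _ => 1) t = μ := by
    rw [intervalIntegral.integral_of_le zero_le_one, setIntegral_indicator measurableSet_Ioo,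
      inter_eq_right.2 hsub, setIntegral_const, Real.volume_real_Ioo_of_le (by linarith),
      smul_eq_mul]
    ring
  have hlim := tendsto_intervalIntegral_of_forall_abs_le zero_le_one (smoothPulse.continuous μ)
    (fun n t => abs_le.2 ⟨by linarith [(mem_Icc μ n t).1], (mem_Icc μ n t).2⟩)
    (fun t ht => smoothPulse.tendsto h0 h1 ht)
  rwa [hμ] at hlim

lemma smoothPulse.tendsto_integral_mul_one_sub {μ : ℝ} (h0 : 0 ≤ μ) (h1 : μ ≤ 1) :
    Tendsto (fun n => ∫ t in (0 : ℝ)..1, smoothPulse μ n t * (1 - smoothPulse μ n t)) atTop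
      (𝓝 0) := by
  set I : ℝ → ℝ := (Ioo ((1 - μ) / 2) ((1 + μ) / 2)).indicator (fun _ => 1)
  have hI : ∀ t, I t * (1 - I t) = 0 := fun t => by
    by_cases ht : t ∈ Ioo ((1 - μ) / 2) ((1 + μ) / 2) <;> simp [I, ht]
  have hlim := tendsto_intervalIntegral_of_forall_abs_le (C := 1)
    (F := fun n t => smoothPulse μ n t * (1 - smoothPulse μ n t)) (f := fun t => I t * (1 - I t))
    zero_le_one
    (fun n => (smoothPulse.continuous μ n).mul
      (continuous_const.sub (smoothPulse.continuous μ n)))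
    (fun n t => by
      obtain ⟨hg0, hg1⟩ := mem_Icc μ n t
      exact abs_le.2 ⟨by nlinarith, by nlinarith⟩)
    (fun t ht => (smoothPulse.tendsto h0 h1 ht).mul
      (tendsto_const_nhds.sub (smoothPulse.tendsto h0 h1 ht)))
  simpa only [hI, intervalIntegral.integral_zero] using hlim

/-- A lower bound `θ` for the density of a `1`-periodic set `S ⊆ ℝ`, certified by a continuous
minorant of its indicator so that averages along oscillating arguments can be compared with it. -/
def HasPeriodicDensityGT (S : Set ℝ) (θ : ℝ) : Prop :=
  ∃ f : ℝ → ℝ, Continuous f ∧ Function.Periodic f 1 ∧ (∀ t, f t ≤ 1) ∧ (∀ t ∉ S, f t ≤ 0) ∧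
    θ < ∫ t in (0 : ℝ)..1, f t

lemma HasPeriodicDensityGT.mono {S S' : Set ℝ} {θ : ℝ} (h : HasPeriodicDensityGT S θ)
    (hS : S ⊆ S') : HasPeriodicDensityGT S' θ := by
  obtain ⟨f, hf, hp, h1, h0, hθ⟩ := h
  exact ⟨f, hf, hp, h1, fun t ht => h0 t fun h => ht (hS h), hθ⟩

-- The minorant is `g - δ⁻¹ g (1 - g)`, nonpositive as soon as `1 - g ≥ δ`.
lemma hasPeriodicDensityGT_one_sub_lt {g : ℝ → ℝ} (hg : Continuous g)
    (hp : Function.Periodic g 1) (h01 : ∀ t, g t ∈ Icc 0 1) {δ θ : ℝ} (hδ : 0 < δ)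
    (hθ : θ < (∫ t in (0 : ℝ)..1, g t) - δ⁻¹ * ∫ t in (0 : ℝ)..1, g t * (1 - g t)) :
    HasPeriodicDensityGT {t | 1 - δ < g t} θ := by
  have hgg : Continuous fun t => g t * (1 - g t) := hg.mul (continuous_const.sub hg)
  have hδgg : Continuous fun t => δ⁻¹ * (g t * (1 - g t)) := continuous_const.mul hgg
  refine ⟨fun t => g t - δ⁻¹ * (g t * (1 - g t)), hg.sub hδgg,
    fun t => by simp only [hp t], fun t => ?_, fun t ht => ?_, ?_⟩
  · have : 0 ≤ δ⁻¹ * (g t * (1 - g t)) :=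
      mul_nonneg (inv_nonneg.2 hδ.le) (mul_nonneg (h01 t).1 (sub_nonneg.2 (h01 t).2))
    linarith [(h01 t).2]
  · have hδg : δ ≤ 1 - g t := by linarith [not_lt.1 (show ¬1 - δ < g t from ht)]
    have : 1 ≤ δ⁻¹ * (1 - g t) := by rwa [← div_eq_inv_mul, one_le_div hδ]
    linarith [mul_le_mul_of_nonneg_left this (h01 t).1]
  · rwa [intervalIntegral.integral_sub (hg.intervalIntegrable _ _)
      (hδgg.intervalIntegrable _ _), intervalIntegral.integral_const_mul]

lemma exists_pulse_profile {μ κ θ₁ θ₂ δ : ℝ} (h0 : 0 ≤ μ) (h1 : μ ≤ 1) (hκ : 0 < κ) (hδ : 0 < δ)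
    (hθ₁ : θ₁ < 1 - μ) (hθ₂ : θ₂ < μ) :
    ∃ g : ℝ → ℝ, ContDiff ℝ (⊤ : ℕ∞) g ∧ Function.Periodic g 1 ∧ (∀ t, g t ∈ Icc 0 1) ∧
      |(∫ t in (0 : ℝ)..1, g t) - μ| < κ ∧ HasPeriodicDensityGT {t | g t < δ} θ₁ ∧
      HasPeriodicDensityGT {t | 1 - δ < g t} θ₂ := by
  have hmean := smoothPulse.tendsto_integral h0 h1
  have hmix : Tendsto (fun n => δ⁻¹ *
      ∫ t in (0 : ℝ)..1, smoothPulse μ n t * (1 - smoothPulse μ n t)) atTop (𝓝 0) := by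
    simpa using (smoothPulse.tendsto_integral_mul_one_sub h0 h1).const_mul δ⁻¹
  obtain ⟨n, hnκ, hn₁, hn₂⟩ := ((hmean.eventually (Metric.ball_mem_nhds μ hκ)).and
    ((((hmean.const_sub 1).sub hmix).eventually_const_lt (by rwa [sub_zero])).and
      ((hmean.sub hmix).eventually_const_lt (by rwa [sub_zero])))).exists
  set g := smoothPulse μ n
  have hg : Continuous g := smoothPulse.continuous μ n
  have h01 : ∀ t, g t ∈ Icc 0 1 := smoothPulse.mem_Icc μ n
  have hp : Function.Periodic g 1 := smoothPulse.periodic μ n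
  refine ⟨g, smoothPulse.contDiff μ n, hp, h01, hnκ, ?_,
    hasPeriodicDensityGT_one_sub_lt hg hp h01 hδ hn₂⟩
  refine (hasPeriodicDensityGT_one_sub_lt (g := fun t => 1 - g t) (continuous_const.sub hg)
    (fun t => by simp only [hp t]) (fun t => ⟨sub_nonneg.2 (h01 t).2, by linarith [(h01 t).1]⟩)
    hδ ?_).mono fun t (ht : 1 - δ < 1 - g t) => show g t < δ by linarith
  rw [intervalIntegral.integral_sub intervalIntegrable_const (hg.intervalIntegrable _ _)]
  simpa [mul_comm] using hn₁

lemma exists_twoPhase_profile {μ₁ μ₂ δ : ℝ} (hμ₁ : 0 ≤ μ₁) (hμ₂ : 0 ≤ μ₂) (hμ : μ₁ + μ₂ = 1)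
    (hδ : 0 < δ) :
    ∃ h : ℝ → ℝ, ContDiff ℝ (⊤ : ℕ∞) h ∧ Function.Periodic h 1 ∧
      (∫ t in (0 : ℝ)..1, h t) = 0 ∧ (∀ t, h t ∈ Icc (-μ₂ - δ) (μ₁ + δ)) ∧
      HasPeriodicDensityGT {t | |h t + μ₂| < δ} (μ₁ - δ) ∧
      HasPeriodicDensityGT {t | |h t - μ₁| < δ} (μ₂ - δ) := by
  obtain ⟨g, hg, hp, h01, hm, hS₁, hS₂⟩ := exists_pulse_profile (θ₁ := μ₁ - δ) (θ₂ := μ₂ - δ)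
    hμ₂ (by linarith) (half_pos hδ) (half_pos hδ) (by linarith) (by linarith)
  obtain ⟨hm₁, hm₂⟩ := abs_lt.1 hm
  refine ⟨fun t => g t - ∫ s in (0 : ℝ)..1, g s, hg.sub contDiff_const,
    fun t => by simp only [hp t], ?_, fun t => ⟨by linarith [(h01 t).1], by linarith [(h01 t).2]⟩,
    hS₁.mono fun t (ht : g t < δ / 2) => ?_, hS₂.mono fun t (ht : 1 - δ / 2 < g t) => ?_⟩
  · rw [intervalIntegral.integral_sub (hg.continuous.intervalIntegrable _ _)
      intervalIntegrable_const]
    simp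
  · change |g t - (∫ s in (0 : ℝ)..1, g s) + μ₂| < δ
    exact abs_lt.2 ⟨by linarith [(h01 t).1], by linarith⟩
  · change |g t - (∫ s in (0 : ℝ)..1, g s) - μ₁| < δ
    exact abs_lt.2 ⟨by linarith, by linarith [(h01 t).2]⟩

section Averaging

lemma integral_le_measureReal {X : Type*} [MeasurableSpace X] {μ : Measure X} {f : X → ℝ}
    {s : Set X} (hs : μ s ≠ ⊤) (h1 : ∀ x ∈ s, f x ≤ 1) (h0 : ∀ x ∉ s, f x ≤ 0) :
    ∫ x, f x ∂μ ≤ μ.real s :=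
  (ENNReal.ofReal_le_iff_le_toReal hs).1 (integral_le_measure h1 h0)

lemma abs_measureReal_sub_lt_of_disjoint {X : Type*} [MeasurableSpace X] {μ : Measure X}
    {s t O : Set X} (hO : μ O ≠ ⊤) (hs : s ⊆ O) (ht : t ⊆ O) (hst : Disjoint s t)
    (htm : MeasurableSet t) {a b ε : ℝ} (hab : a + b = μ.real O) (ha : a - ε < μ.real s)
    (hb : b - ε < μ.real t) :
    |μ.real s - a| < ε ∧ |μ.real t - b| < ε := by
  have hle : μ.real s + μ.real t ≤ μ.real O := by
    rw [← measureReal_union hst htm (measure_ne_top_of_subset hs hO)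
      (measure_ne_top_of_subset ht hO)]
    exact measureReal_mono (union_subset hs ht) hO
  exact ⟨abs_lt.2 ⟨by linarith, by linarith⟩, abs_lt.2 ⟨by linarith, by linarith⟩⟩

lemma integrable_mul_of_hasCompactSupport {X : Type*} [TopologicalSpace X] [MeasurableSpace X]
    [OpensMeasurableSpace X] {μ : Measure X} [IsFiniteMeasureOnCompacts μ] {φ g : X → ℝ}
    (hφ : Continuous φ) (hφc : HasCompactSupport φ) (hg : Continuous g) :
    Integrable (fun x => φ x * g x) μ :=
  (hφ.mul hg).integrable_of_hasCompactSupport hφc.mul_right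

lemma measureReal_le_integral_add_measureReal_sdiff {X : Type*} [TopologicalSpace X]
    [MeasurableSpace X] [OpensMeasurableSpace X] {μ : Measure X} [IsFiniteMeasureOnCompacts μ]
    {φ : X → ℝ} (hφ : Continuous φ) (hφc : HasCompactSupport φ) (hφ0 : ∀ x, 0 ≤ φ x)
    {O : Set X} (hOμ : μ O ≠ ⊤) :
    μ.real O ≤ ∫ x, φ x ∂μ + μ.real (O \ {x | φ x = 1}) := by
  have hmarkov : μ.real {x | 1 ≤ φ x} ≤ ∫ x, φ x ∂μ := by
    simpa only [one_mul] using mul_meas_ge_le_integral_of_nonneg (μ := μ) (ae_of_all μ hφ0)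
      (hφ.integrable_of_hasCompactSupport hφc) 1
  have hfin : μ {x | 1 ≤ φ x} ≠ ⊤ :=
    ((hφ.integrable_of_hasCompactSupport hφc).measure_ge_lt_top one_pos).ne
  have hcover : O ⊆ {x | 1 ≤ φ x} ∪ O \ {x | φ x = 1} := fun x hx => by
    by_cases h : φ x = 1
    exacts [Or.inl h.ge, Or.inr ⟨hx, h⟩]
  linarith [measureReal_mono hcover (measure_union_ne_top hfin
    (measure_ne_top_of_subset sdiff_subset hOμ)), measureReal_union_le (μ := μ) {x | 1 ≤ φ x}
    (O \ {x | φ x = 1})]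

variable {E : Type*} [NormedAddCommGroup E] [NormedSpace ℝ E]

lemma hasFDerivAt_comp_mul_clm {F : ℝ → ℝ} {F' : ℝ} {N : ℝ} {ξ : E →L[ℝ] ℝ} {x : E}
    (hF : HasDerivAt F F' (N * ξ x)) :
    HasFDerivAt (fun y => F (N * ξ y)) ((F' * N) • ξ) x := by
  rw [mul_smul]
  exact hF.comp_hasFDerivAt x (ξ.hasFDerivAt.const_mul N)

variable [FiniteDimensional ℝ E] [MeasurableSpace E] [BorelSpace E] (ν : Measure E)

lemma exists_contDiff_cutoff {O : Set E} (hO : IsOpen O) (hOν : ν O ≠ ⊤) {η : ℝ} (hη : 0 < η) :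
    ∃ φ : E → ℝ, ContDiff ℝ (⊤ : ℕ∞) φ ∧ HasCompactSupport φ ∧ tsupport φ ⊆ O ∧
      (∀ x, φ x ∈ Icc 0 1) ∧ ν.real (O \ {x | φ x = 1}) < η := by
  obtain ⟨K, hKO, hK, hKν⟩ := hO.measurableSet.exists_isCompact_sdiff_lt hOν
    (ENNReal.ofReal_pos.2 hη).ne'
  obtain ⟨L, hL, hKL, hLO⟩ := exists_compact_between hK hO hKO
  obtain ⟨φ, hφ, hφ01, hφs, hφ1⟩ := exists_contMDiff_support_eq_eq_one_iff
    (modelWithCornersSelf ℝ E) isOpen_interior hK.isClosed hKL (n := ⊤)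
  have hsupp : tsupport φ ⊆ L := by
    rw [tsupport, hφs]
    exact closure_minimal interior_subset hL.isClosed
  have hK1 : {x | φ x = 1} = K := Set.ext fun x => (hφ1 x).symm
  refine ⟨φ, hφ.contDiff, hL.of_isClosed_subset (isClosed_tsupport φ) hsupp, hsupp.trans hLO,
    fun x => hφ01 ⟨x, rfl⟩, ?_⟩
  rw [hK1, Measure.real]
  exact ENNReal.toReal_lt_of_lt_ofReal hKν

variable [ν.IsAddHaarMeasure]

lemma mul_integral_mul_comp_eq_neg {F f : ℝ → ℝ} (hF : ∀ t, HasDerivAt F (f t) t)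
    (hf : Continuous f) {φ : E → ℝ} (hφ : ContDiff ℝ 1 φ) (hφc : HasCompactSupport φ)
    {ξ : E →L[ℝ] ℝ} {e : E} (he : ξ e = 1) (N : ℝ) :
    N * ∫ x, φ x * f (N * ξ x) ∂ν = -∫ x, fderiv ℝ φ x e * F (N * ξ x) ∂ν := by
  have hder : ∀ x, HasFDerivAt (fun y => F (N * ξ y)) ((f (N * ξ x) * N) • ξ) x := fun x =>
    hasFDerivAt_comp_mul_clm (hF _)
  have hFc : Continuous fun x => F (N * ξ x) := continuous_iff_continuousAt.2 fun x =>
    (hder x).continuousAt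
  have hFe : ∀ x, fderiv ℝ (fun y => F (N * ξ y)) x e = N * f (N * ξ x) := fun x => by
    rw [(hder x).fderiv, smul_apply, he, smul_eq_mul, mul_one, mul_comm]
  have hfc : Continuous fun x => N * f (N * ξ x) :=
    continuous_const.mul (hf.comp (continuous_const.mul ξ.continuous))
  have hφe : Continuous fun x => fderiv ℝ φ x e :=
    (hφ.continuous_fderiv one_ne_zero).clm_apply continuous_const
  rw [← integral_mul_fderiv_eq_neg_fderiv_mul_of_integrable
    (integrable_mul_of_hasCompactSupport hφe (hφc.fderiv_apply ℝ e) hFc)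
    (by simpa only [hFe] using
      integrable_mul_of_hasCompactSupport hφ.continuous hφc hfc)
    (integrable_mul_of_hasCompactSupport hφ.continuous hφc hFc)
    (fun x _ => hφ.differentiable one_ne_zero x) (fun x _ => (hder x).differentiableAt),
    ← integral_const_mul]
  simp only [hFe, mul_left_comm]

lemma tendsto_integral_mul_comp_periodic_of_mean_zero {f : ℝ → ℝ} (hf : Continuous f)
    (hp : Function.Periodic f 1) (h0 : ∫ t in (0 : ℝ)..1, f t = 0) {φ : E → ℝ}
    (hφ : ContDiff ℝ 1 φ) (hφc : HasCompactSupport φ) {ξ : E →L[ℝ] ℝ} (hξ : ξ ≠ 0) :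
    Tendsto (fun N : ℝ => ∫ x, φ x * f (N * ξ x) ∂ν) atTop (𝓝 0) := by
  obtain ⟨e, he⟩ : ∃ e, ξ e = 1 :=
    LinearMap.surjective (f := (ξ : E →ₗ[ℝ] ℝ)) (by exact_mod_cast hξ) 1
  obtain ⟨F, hFp, -, hF⟩ := exists_periodic_primitive hf hp h0
  obtain ⟨C, hC⟩ := exists_abs_le_of_periodic_of_continuous hFp one_ne_zero
    (continuous_iff_continuousAt.2 fun t => (hF t).continuousAt)
  have hφe : Integrable (fun x => fderiv ℝ φ x e) ν :=
    ((hφ.continuous_fderiv one_ne_zero).clm_apply continuous_const).integrable_of_hasCompactSupport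
      (hφc.fderiv_apply ℝ e)
  have hbound : ∀ N, |N * ∫ x, φ x * f (N * ξ x) ∂ν| ≤ ∫ x, |fderiv ℝ φ x e| * C ∂ν := fun N => by
    rw [mul_integral_mul_comp_eq_neg ν hF hf hφ hφc he, abs_neg, ← Real.norm_eq_abs]
    refine norm_integral_le_of_norm_le (hφe.abs.mul_const C) (ae_of_all _ fun x => ?_)
    rw [norm_mul]
    exact mul_le_mul_of_nonneg_left (hC _) (norm_nonneg _)
  refine squeeze_zero_norm' ?_
    (tendsto_const_nhds.div_atTop (a := ∫ x, |fderiv ℝ φ x e| * C ∂ν) tendsto_id)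
  filter_upwards [eventually_gt_atTop (0 : ℝ)] with N hN
  rw [id, le_div_iff₀' hN, Real.norm_eq_abs]
  simpa only [abs_mul, abs_of_pos hN] using hbound N

lemma tendsto_integral_mul_comp_periodic {f : ℝ → ℝ} (hf : Continuous f)
    (hp : Function.Periodic f 1) {φ : E → ℝ} (hφ : ContDiff ℝ 1 φ) (hφc : HasCompactSupport φ)
    {ξ : E →L[ℝ] ℝ} (hξ : ξ ≠ 0) :
    Tendsto (fun N : ℝ => ∫ x, φ x * f (N * ξ x) ∂ν) atTop
      (𝓝 ((∫ t in (0 : ℝ)..1, f t) * ∫ x, φ x ∂ν)) := by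
  set m := ∫ t in (0 : ℝ)..1, f t
  have hfm : Continuous fun t => f t - m := hf.sub continuous_const
  have hmean : ∫ t in (0 : ℝ)..1, (f t - m) = 0 := by
    rw [intervalIntegral.integral_sub (hf.intervalIntegrable _ _) intervalIntegrable_const]
    simp [m]
  have hosc := tendsto_integral_mul_comp_periodic_of_mean_zero ν hfm
    (fun t => by simp only [hp t]) hmean hφ hφc hξ
  have hsplit : ∀ N, ∫ x, φ x * f (N * ξ x) ∂ν =
      (∫ x, φ x * (f (N * ξ x) - m) ∂ν) + m * ∫ x, φ x ∂ν := fun N => by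
    have hfN : Continuous fun x => f (N * ξ x) - m := hfm.comp (continuous_const.mul ξ.continuous)
    rw [← integral_const_mul, ← integral_add
      (integrable_mul_of_hasCompactSupport hφ.continuous hφc hfN)
      ((hφ.continuous.integrable_of_hasCompactSupport hφc).const_mul m)]
    exact integral_congr_ae (ae_of_all _ fun x => by ring)
  simpa only [hsplit, zero_add] using hosc.add_const (m * ∫ x, φ x ∂ν)

lemma eventually_lt_measureReal_superlevel_inter {S : Set ℝ} {θ : ℝ}
    (hS : HasPeriodicDensityGT S θ) {O : Set E} (hOν : ν O ≠ ⊤) {φ : E → ℝ}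
    (hφ : ContDiff ℝ 1 φ) (hφc : HasCompactSupport φ) (hφO : Function.support φ ⊆ O)
    (hφ01 : ∀ x, φ x ∈ Icc 0 1) {ξ : E →L[ℝ] ℝ} (hξ : ξ ≠ 0) {c ε : ℝ} (hc0 : 0 ≤ c) (hc1 : c < 1)
    (hε : 0 < ε) :
    ∀ᶠ N : ℝ in atTop, θ * ν.real O - 2 * ν.real (O \ {x | φ x = 1}) - ε <
      ν.real {x | c < φ x ∧ N * ξ x ∈ S} := by
  obtain ⟨f, hf, hp, hf1, hf0, hθ⟩ := hS
  set m := ∫ t in (0 : ℝ)..1, f t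
  have hm1 : m ≤ 1 := by
    simpa only [intervalIntegral.integral_const, sub_zero, one_smul] using
      intervalIntegral.integral_mono (μ := volume) zero_le_one (hf.intervalIntegrable 0 1)
        intervalIntegrable_const hf1
  have hθφ : θ * ν.real O - ν.real (O \ {x | φ x = 1}) - ε < m * ∫ x, φ x ∂ν := by
    have hφO1 : ∫ x, φ x ∂ν ≤ ν.real O := integral_le_measureReal hOν (fun x _ => (hφ01 x).2)
      fun x hx => (Function.notMem_support.1 fun h => hx (hφO h)).le
    have hOφ := measureReal_le_integral_add_measureReal_sdiff hφ.continuous hφc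
      (fun x => (hφ01 x).1) hOν
    nlinarith [mul_nonneg (sub_nonneg.2 hθ.le) (measureReal_nonneg (μ := ν) (s := O)),
      mul_nonneg (sub_nonneg.2 hm1) (sub_nonneg.2 hφO1)]
  filter_upwards [(tendsto_integral_mul_comp_periodic ν hf hp hφ hφc hξ).eventually_const_lt hθφ]
    with N hN
  set A := {x | c < φ x ∧ N * ξ x ∈ S}
  have hAO : A ⊆ O := fun x hx => hφO (hc0.trans_lt hx.1).ne'
  have hle : ∫ x, φ x * f (N * ξ x) ∂ν ≤ ν.real (A ∪ O \ {x | φ x = 1}) := by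
    refine integral_le_measureReal (measure_ne_top_of_subset (union_subset hAO sdiff_subset) hOν)
      (fun x _ => ?_) fun x hx => ?_
    · linarith [mul_le_mul_of_nonneg_left (hf1 (N * ξ x)) (hφ01 x).1, (hφ01 x).2]
    · by_cases hxO : x ∈ O
      · have hx1 : φ x = 1 := by_contra fun h => hx (Or.inr ⟨hxO, h⟩)
        rw [hx1, one_mul]
        exact hf0 _ fun h => hx (Or.inl ⟨hx1.symm ▸ hc1, h⟩)
      · rw [Function.notMem_support.1 fun h => hxO (hφO h), zero_mul]
  linarith [measureReal_union_le (μ := ν) A (O \ {x | φ x = 1})]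

end Averaging

section WavePacket

lemma exists_norm_le_of_forall_notMem_eq_zero {X F : Type*} [TopologicalSpace X]
    [NormedAddCommGroup F] {f : X → F} {K : Set X} (hK : IsCompact K) (hf : Continuous f)
    (h0 : ∀ x ∉ K, f x = 0) : ∃ C, ∀ x, ‖f x‖ ≤ C := by
  obtain ⟨C, hC⟩ := hK.exists_bound_of_continuousOn hf.continuousOn
  refine ⟨max C 0, fun x => ?_⟩
  by_cases hx : x ∈ K
  · exact (hC x hx).trans (le_max_left C 0)
  · rw [h0 x hx, norm_zero]
    exact le_max_right C 0

lemma norm_smul_smul_le {F : Type*} [NormedAddCommGroup F] [NormedSpace ℝ F] {a b C k : ℝ}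
    {u : F} (ha : 0 ≤ a) (hb : |b| ≤ C) (hu : ‖u‖ ≤ k) : ‖a • b • u‖ ≤ a * (C * k) := by
  rw [norm_smul, norm_smul, Real.norm_of_nonneg ha, Real.norm_eq_abs]
  exact mul_le_mul_of_nonneg_left
    (mul_le_mul hb hu (norm_nonneg u) ((abs_nonneg b).trans hb)) ha

variable {E : Type*} [NormedAddCommGroup E] [NormedSpace ℝ E]

variable (E) in
/-- The derivatives of order two and one (in this order) of a scalar function on `E` at a point. -/
def TwoJet := (E →L[ℝ] E →L[ℝ] ℝ) × (E →L[ℝ] ℝ)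

namespace TwoJet

instance : NormedAddCommGroup (TwoJet E) :=
  inferInstanceAs (NormedAddCommGroup ((E →L[ℝ] E →L[ℝ] ℝ) × (E →L[ℝ] ℝ)))

instance : NormedSpace ℝ (TwoJet E) :=
  inferInstanceAs (NormedSpace ℝ ((E →L[ℝ] E →L[ℝ] ℝ) × (E →L[ℝ] ℝ)))

instance [FiniteDimensional ℝ E] : FiniteDimensional ℝ (TwoJet E) :=
  inferInstanceAs (Module.Finite ℝ ((E →L[ℝ] E →L[ℝ] ℝ) × (E →L[ℝ] ℝ)))

/-- The jet with second derivative `T` and first derivative `p`. -/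
def mk (T : E →L[ℝ] E →L[ℝ] ℝ) (p : E →L[ℝ] ℝ) : TwoJet E := (T, p)

@[simp] lemma fst_mk (T : E →L[ℝ] E →L[ℝ] ℝ) (p : E →L[ℝ] ℝ) : (mk T p).1 = T := rfl

@[simp] lemma snd_mk (T : E →L[ℝ] E →L[ℝ] ℝ) (p : E →L[ℝ] ℝ) : (mk T p).2 = p := rfl

lemma mk_zero_zero : mk (0 : E →L[ℝ] E →L[ℝ] ℝ) 0 = 0 := rfl

lemma ext {X Y : TwoJet E} (h₁ : ∀ a b, X.1 a b = Y.1 a b) (h₂ : ∀ a, X.2 a = Y.2 a) : X = Y :=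
  Prod.ext (ContinuousLinearMap.ext fun a => ContinuousLinearMap.ext (h₁ a))
    (ContinuousLinearMap.ext h₂)

@[simp] lemma fst_add (X Y : TwoJet E) : (X + Y).1 = X.1 + Y.1 := rfl

@[simp] lemma snd_add (X Y : TwoJet E) : (X + Y).2 = X.2 + Y.2 := rfl

@[simp] lemma fst_sub (X Y : TwoJet E) : (X - Y).1 = X.1 - Y.1 := rfl

@[simp] lemma snd_sub (X Y : TwoJet E) : (X - Y).2 = X.2 - Y.2 := rfl

@[simp] lemma fst_smul (c : ℝ) (X : TwoJet E) : (c • X).1 = c • X.1 := rfl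

@[simp] lemma snd_smul (c : ℝ) (X : TwoJet E) : (c • X).2 = c • X.2 := rfl

end TwoJet

/-- The two-jet of `ψ` at `x`. The value of `ψ` is left out, because the potentials below only
involve derivatives. -/
def twoJet (ψ : E → ℝ) (x : E) : TwoJet E :=
  .mk (fderiv ℝ (fderiv ℝ ψ) x) (fderiv ℝ ψ x)

/-- The leading jet `ξ ⊗ ξ` of a plane wave with phase `ξ`. -/
def planeJet (ξ : E →L[ℝ] ℝ) : TwoJet E := .mk (ξ.smulRight ξ) 0

/-- The modulated plane wave `N⁻² φ(x) H(N ξ(x))` with envelope `φ`, profile `H` and phase `ξ`. -/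
def wavePacket (φ : E → ℝ) (H : ℝ → ℝ) (ξ : E →L[ℝ] ℝ) (N : ℝ) (x : E) : ℝ :=
  (N ^ 2)⁻¹ * (φ x * H (N * ξ x))

/-- The jet multiplying `N⁻¹` in the two-jet of a wave packet with envelope `φ` and phase `ξ`. -/
def crossJet (φ : E → ℝ) (ξ : E →L[ℝ] ℝ) (x : E) : TwoJet E :=
  .mk (ξ.smulRight (fderiv ℝ φ x) + (fderiv ℝ φ x).smulRight ξ) (φ x • ξ)

lemma contDiff_twoJet {m n : WithTop ℕ∞} {ψ : E → ℝ} (hψ : ContDiff ℝ n ψ) (hmn : m + 2 ≤ n) :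
    ContDiff ℝ m (twoJet ψ) := by
  have h1 : ContDiff ℝ (m + 1) (fderiv ℝ ψ) :=
    hψ.fderiv_right (by rwa [add_assoc, one_add_one_eq_two])
  exact (h1.fderiv_right le_rfl).prodMk (h1.of_le le_self_add)

lemma twoJet_eq_zero_of_notMem_tsupport {ψ : E → ℝ} {x : E} (hx : x ∉ tsupport ψ) :
    twoJet ψ x = 0 := by
  have h1 : x ∉ tsupport (fderiv ℝ ψ) := fun h => hx (tsupport_fderiv_subset ℝ h)
  have h2 : x ∉ tsupport (fderiv ℝ (fderiv ℝ ψ)) := fun h => h1 (tsupport_fderiv_subset ℝ h)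
  rw [twoJet, image_eq_zero_of_notMem_tsupport h1, image_eq_zero_of_notMem_tsupport h2,
    TwoJet.mk_zero_zero]

lemma tsupport_clm_twoJet_subset {F : Type*} [NormedAddCommGroup F] [NormedSpace ℝ F]
    (L : TwoJet E →L[ℝ] F) (ψ : E → ℝ) : tsupport (fun x => L (twoJet ψ x)) ⊆ tsupport ψ := by
  refine closure_minimal (fun x hx => ?_) (isClosed_tsupport ψ)
  by_contra h
  exact hx ((congrArg L (twoJet_eq_zero_of_notMem_tsupport h)).trans (map_zero L))

lemma exists_norm_twoJet_le {φ : E → ℝ} (hφ : ContDiff ℝ 2 φ) (hφc : HasCompactSupport φ) :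
    ∃ C, ∀ x, ‖twoJet φ x‖ ≤ C :=
  exists_norm_le_of_forall_notMem_eq_zero hφc
    (contDiff_twoJet (m := 0) hφ (zero_add _).le).continuous
    fun _ => twoJet_eq_zero_of_notMem_tsupport

lemma exists_norm_crossJet_le {φ : E → ℝ} (hφ : ContDiff ℝ 1 φ) (hφc : HasCompactSupport φ)
    (ξ : E →L[ℝ] ℝ) : ∃ C, ∀ x, ‖crossJet φ ξ x‖ ≤ C := by
  have hφ' : ContDiff ℝ 0 (fderiv ℝ φ) := hφ.fderiv_right (by simp)
  have hc : ContDiff ℝ 0 (crossJet φ ξ) := ((contDiff_const.smulRight hφ').add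
    (hφ'.smulRight contDiff_const)).prodMk ((hφ.of_le zero_le_one).smul contDiff_const)
  refine exists_norm_le_of_forall_notMem_eq_zero hφc hc.continuous fun x hx => ?_
  have hx' : x ∉ tsupport (fderiv ℝ φ) := fun h => hx (tsupport_fderiv_subset ℝ h)
  simp [crossJet, image_eq_zero_of_notMem_tsupport hx, image_eq_zero_of_notMem_tsupport hx',
    TwoJet.mk_zero_zero]

lemma twoJet_const_mul {f : E → ℝ} (hf : ContDiff ℝ 2 f) (c : ℝ) (x : E) :
    twoJet (fun y => c * f y) x = c • twoJet f x := by
  have h1 : fderiv ℝ (fun y => c * f y) = fun y => c • fderiv ℝ f y := funext fun y =>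
    fderiv_const_mul (hf.differentiable two_ne_zero y) c
  have hf' : DifferentiableAt ℝ (fderiv ℝ f) x :=
    (hf.fderiv_right (m := 1) le_rfl).differentiable one_ne_zero x
  rw [twoJet, h1, fderiv_fun_const_smul hf' c]
  rfl

lemma twoJet_mul {f g : E → ℝ} (hf : ContDiff ℝ 2 f) (hg : ContDiff ℝ 2 g) (x : E) :
    twoJet (fun y => f y * g y) x = f x • twoJet g x + g x • twoJet f x +
      .mk ((fderiv ℝ f x).smulRight (fderiv ℝ g x) +
        (fderiv ℝ g x).smulRight (fderiv ℝ f x)) 0 := by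
  have hd : ∀ {u : E → ℝ}, ContDiff ℝ 2 u → ∀ y, DifferentiableAt ℝ u y := fun hu y =>
    hu.differentiable two_ne_zero y
  have hd' : ∀ {u : E → ℝ}, ContDiff ℝ 2 u → DifferentiableAt ℝ (fderiv ℝ u) x := fun hu =>
    (hu.fderiv_right (m := 1) le_rfl).differentiable one_ne_zero x
  have h1 : fderiv ℝ (fun y => f y * g y) = fun y => f y • fderiv ℝ g y + g y • fderiv ℝ f y :=
    funext fun y => fderiv_fun_mul (hd hf y) (hd hg y)
  have h2 : HasFDerivAt (fun y => f y • fderiv ℝ g y + g y • fderiv ℝ f y)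
      (f x • fderiv ℝ (fderiv ℝ g) x + (fderiv ℝ f x).smulRight (fderiv ℝ g x) +
        (g x • fderiv ℝ (fderiv ℝ f) x + (fderiv ℝ g x).smulRight (fderiv ℝ f x))) x :=
    ((hd hf x).hasFDerivAt.smul (hd' hg).hasFDerivAt).add
      ((hd hg x).hasFDerivAt.smul (hd' hf).hasFDerivAt)
  rw [twoJet, h1, h2.fderiv, add_add_add_comm]
  exact Prod.ext rfl (add_zero _).symm

lemma twoJet_planeWave {H H₁ h : ℝ → ℝ} (hH : ∀ t, HasDerivAt H (H₁ t) t)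
    (hH₁ : ∀ t, HasDerivAt H₁ (h t) t) (ξ : E →L[ℝ] ℝ) (N : ℝ) (x : E) :
    twoJet (fun y => H (N * ξ y)) x =
      (N ^ 2 * h (N * ξ x)) • planeJet ξ + .mk 0 ((N * H₁ (N * ξ x)) • ξ) := by
  have h1 : fderiv ℝ (fun y => H (N * ξ y)) = fun y => (H₁ (N * ξ y) * N) • ξ :=
    funext fun y => (hasFDerivAt_comp_mul_clm (hH _)).fderiv
  have h2 : HasFDerivAt (fun y => (H₁ (N * ξ y) * N) • ξ)
      ((N • (h (N * ξ x) * N) • ξ).smulRight ξ) x :=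
    ((hasFDerivAt_comp_mul_clm (hH₁ _)).mul_const N).smul_const ξ
  rw [twoJet, h1, h2.fderiv]
  refine TwoJet.ext (fun a b => ?_) fun a => ?_
  · simp only [planeJet, TwoJet.fst_mk, TwoJet.fst_add, TwoJet.fst_smul,
      ContinuousLinearMap.smulRight_apply, smul_apply, smul_eq_mul, add_apply, zero_apply, add_zero]
    ring
  · simp [planeJet, mul_comm]

lemma contDiff_wavePacket {n : WithTop ℕ∞} {φ : E → ℝ} {H : ℝ → ℝ} (hφ : ContDiff ℝ n φ)
    (hH : ContDiff ℝ n H) (ξ : E →L[ℝ] ℝ) (N : ℝ) : ContDiff ℝ n (wavePacket φ H ξ N) :=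
  contDiff_const.mul (hφ.mul (hH.comp (contDiff_const.mul ξ.contDiff)))

lemma tsupport_wavePacket_subset (φ : E → ℝ) (H : ℝ → ℝ) (ξ : E →L[ℝ] ℝ) (N : ℝ) :
    tsupport (wavePacket φ H ξ N) ⊆ tsupport φ :=
  closure_mono fun x hx h => hx (by rw [wavePacket, h, zero_mul, mul_zero])

lemma twoJet_wavePacket_sub {φ : E → ℝ} (hφ : ContDiff ℝ 2 φ) {H H₁ h : ℝ → ℝ}
    (hHc : ContDiff ℝ 2 H) (hH : ∀ t, HasDerivAt H (H₁ t) t)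
    (hH₁ : ∀ t, HasDerivAt H₁ (h t) t) (ξ : E →L[ℝ] ℝ) {N : ℝ} (hN : N ≠ 0) (x : E) :
    twoJet (wavePacket φ H ξ N) x - (φ x * h (N * ξ x)) • planeJet ξ =
      (N⁻¹ * H₁ (N * ξ x)) • crossJet φ ξ x + ((N ^ 2)⁻¹ * H (N * ξ x)) • twoJet φ x := by
  have hHξ : ContDiff ℝ 2 fun y => H (N * ξ y) := hHc.comp (contDiff_const.mul ξ.contDiff)
  have hgrad : fderiv ℝ (fun y => H (N * ξ y)) x = (H₁ (N * ξ x) * N) • ξ :=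
    (hasFDerivAt_comp_mul_clm (hH _)).fderiv
  unfold wavePacket
  rw [twoJet_const_mul (hφ.mul hHξ), twoJet_mul hφ hHξ, twoJet_planeWave hH hH₁, hgrad]
  refine TwoJet.ext (fun a b => ?_) fun a => ?_
  · simp only [planeJet, crossJet, TwoJet.fst_mk, TwoJet.fst_sub, TwoJet.fst_add, TwoJet.fst_smul,
      ContinuousLinearMap.smulRight_apply, sub_apply, smul_apply, add_apply, zero_apply,
      smul_eq_mul, add_zero]
    field_simp
    ring
  · simp only [planeJet, crossJet, TwoJet.snd_mk, TwoJet.snd_sub, TwoJet.snd_add, TwoJet.snd_smul,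
      smul_apply, add_apply, smul_eq_mul, smul_zero, add_zero, zero_add, sub_zero]
    field_simp

lemma eventually_norm_twoJet_wavePacket_sub_lt {φ : E → ℝ} (hφ : ContDiff ℝ 2 φ)
    (hφc : HasCompactSupport φ) {H H₁ h : ℝ → ℝ} (hHc : ContDiff ℝ 2 H)
    (hH : ∀ t, HasDerivAt H (H₁ t) t) (hH₁ : ∀ t, HasDerivAt H₁ (h t) t) {C : ℝ}
    (hC : ∀ t, |H t| ≤ C) (hC₁ : ∀ t, |H₁ t| ≤ C) (ξ : E →L[ℝ] ℝ) {ε : ℝ} (hε : 0 < ε) :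
    ∀ᶠ N : ℝ in atTop, ∀ x, ‖twoJet (wavePacket φ H ξ N) x -
      (φ x * h (N * ξ x)) • planeJet ξ‖ < ε := by
  obtain ⟨K, hK⟩ := exists_norm_twoJet_le hφ hφc
  obtain ⟨K₁, hK₁⟩ := exists_norm_crossJet_le (hφ.of_le one_le_two) hφc ξ
  have hlim : Tendsto (fun N : ℝ => N⁻¹ * (C * K₁) + (N ^ 2)⁻¹ * (C * K)) atTop (𝓝 0) := by
    simpa using (tendsto_inv_atTop_zero.mul_const (C * K₁)).add
      ((tendsto_inv_atTop_zero.comp (tendsto_pow_atTop two_ne_zero)).mul_const (C * K))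
  filter_upwards [hlim.eventually_lt_const hε, eventually_gt_atTop 0] with N hNε hN x
  refine lt_of_le_of_lt ?_ hNε
  rw [twoJet_wavePacket_sub hφ hHc hH hH₁ ξ hN.ne', mul_smul, mul_smul]
  exact norm_add_le_of_le
    (norm_smul_smul_le (inv_nonneg.2 hN.le) (hC₁ _) (hK₁ x))
    (norm_smul_smul_le (inv_nonneg.2 (sq_nonneg N)) (hC _) (hK x))

end WavePacket

lemma exists_bounded_double_primitive {h : ℝ → ℝ} (hh : ContDiff ℝ (⊤ : ℕ∞) h)
    (hp : Function.Periodic h 1) (h0 : ∫ t in (0 : ℝ)..1, h t = 0) :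
    ∃ (H H₁ : ℝ → ℝ) (C : ℝ), ContDiff ℝ (⊤ : ℕ∞) H ∧ (∀ t, HasDerivAt H (H₁ t) t) ∧
      (∀ t, HasDerivAt H₁ (h t) t) ∧ (∀ t, |H t| ≤ C) ∧ ∀ t, |H₁ t| ≤ C := by
  obtain ⟨H₁, hp₁, h0₁, hH₁⟩ := exists_periodic_primitive hh.continuous hp h0
  have hc₁ : ContDiff ℝ (⊤ : ℕ∞) H₁ := contDiff_infty_of_hasDerivAt hh hH₁
  obtain ⟨H, hpH, -, hH⟩ := exists_periodic_primitive hc₁.continuous hp₁ h0₁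
  have hcH : ContDiff ℝ (⊤ : ℕ∞) H := contDiff_infty_of_hasDerivAt hc₁ hH
  obtain ⟨C, hC⟩ := exists_abs_le_of_periodic_of_continuous hpH one_ne_zero hcH.continuous
  obtain ⟨C₁, hC₁⟩ := exists_abs_le_of_periodic_of_continuous hp₁ one_ne_zero hc₁.continuous
  exact ⟨H, H₁, max C C₁, hcH, hH, hH₁, fun t => (hC t).trans (le_max_left C C₁),
    fun t => (hC₁ t).trans (le_max_right C C₁)⟩

section TwoPhase

lemma abs_add_mul_lt_two_mul {a s t δ : ℝ} (ha : |a| ≤ 1) (hs0 : 0 ≤ s) (hs : 1 - δ < s)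
    (hs1 : s ≤ 1) (ht : |t + a| < δ) : |a + s * t| < 2 * δ := by
  have hst : |s * (t + a)| < δ := by
    rw [abs_mul, abs_of_nonneg hs0]
    exact (mul_le_of_le_one_left (abs_nonneg _) hs1).trans_lt ht
  have hsa : |(1 - s) * a| ≤ 1 - s := by
    rw [abs_mul, abs_of_nonneg (sub_nonneg.2 hs1)]
    exact mul_le_of_le_one_right (sub_nonneg.2 hs1) ha
  calc |a + s * t| = |s * (t + a) + (1 - s) * a| := by ring_nf
    _ ≤ |s * (t + a)| + |(1 - s) * a| := abs_add_le _ _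
    _ < 2 * δ := by linarith

lemma exists_pos_le_mul_lt {c ε : ℝ} (hc : 0 < c) (hε : 0 < ε) (V : ℝ) :
    ∃ δ > 0, δ ≤ c ∧ δ * V < ε := by
  have hV : ∀ᶠ δ in 𝓝[>] (0 : ℝ), δ * V < ε :=
    ((continuous_mul_const V).tendsto' 0 0 (zero_mul V)).eventually_lt_const hε
      |>.filter_mono nhdsWithin_le_nhds
  obtain ⟨δ, ⟨hδ, hδc⟩, hδV⟩ := ((eventually_of_mem (Ioc_mem_nhdsGT hc) fun _ h => h).and hV).exists
  exact ⟨δ, hδ, hδc, hδV⟩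

variable {E : Type*} [NormedAddCommGroup E] [NormedSpace ℝ E] [FiniteDimensional ℝ E]
  [MeasurableSpace E] [BorelSpace E] (ν : Measure E) [ν.IsAddHaarMeasure]

lemma exists_twoPhase_packet {O : Set E} (hO : IsOpen O) (hOν : ν O ≠ ⊤) {ξ : E →L[ℝ] ℝ}
    (hξ : ξ ≠ 0) {μ₁ μ₂ : ℝ} (hμ₁ : 0 ≤ μ₁) (hμ₂ : 0 ≤ μ₂) (hμ : μ₁ + μ₂ = 1) {ε : ℝ}
    (hε : 0 < ε) :
    ∃ ψ p : E → ℝ, ContDiff ℝ (⊤ : ℕ∞) ψ ∧ HasCompactSupport ψ ∧ tsupport ψ ⊆ O ∧ Continuous p ∧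
      (∀ x, p x ∈ Icc (-ε) (1 + ε)) ∧ (∀ x, ‖twoJet ψ x - (p x - μ₂) • planeJet ξ‖ < ε) ∧
      μ₁ * ν.real O - ε < ν.real {x ∈ O | |p x| < ε} ∧
      μ₂ * ν.real O - ε < ν.real {x ∈ O | |p x - 1| < ε} := by
  obtain ⟨δ, hδ, hδ', hδV⟩ := exists_pos_le_mul_lt (lt_min one_pos (half_pos hε))
    (show 0 < ε / 4 by positivity) (ν.real O)
  obtain ⟨hδ1, hδε⟩ := le_min_iff.1 hδ'
  obtain ⟨φ, hφ, hφc, hφO, hφ01, hφν⟩ :=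
    exists_contDiff_cutoff ν hO hOν (η := ε / 8) (by positivity)
  obtain ⟨h, hh, hp, h0, hrange, hS₁, hS₂⟩ := exists_twoPhase_profile hμ₁ hμ₂ hμ hδ
  obtain ⟨H, H₁, C, hHc, hH, hH₁, hC, hC₁⟩ := exists_bounded_double_primitive hh hp h0
  have hφO' : Function.support φ ⊆ O := (subset_tsupport φ).trans hφO
  have hφ2 : ContDiff ℝ 2 φ := contDiff_infty.1 hφ 2
  have hH2 : ContDiff ℝ 2 H := contDiff_infty.1 hHc 2
  have hvol : ∀ {S θ}, HasPeriodicDensityGT S θ → _ := fun hS =>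
    eventually_lt_measureReal_superlevel_inter ν hS hOν (hφ2.of_le one_le_two) hφc hφO' hφ01 hξ
      (sub_nonneg.2 hδ1) (sub_lt_self 1 hδ) (half_pos hε)
  obtain ⟨N, hjet, hN₁, hN₂⟩ := ((eventually_norm_twoJet_wavePacket_sub_lt
    hφ2 hφc hH2 hH hH₁ hC hC₁ ξ hε).and ((hvol hS₁).and (hvol hS₂))).exists
  have hmono : ∀ {S : Set ℝ} {P : E → Prop},
      (∀ x, 1 - δ < φ x → N * ξ x ∈ S → P x) →
      ν.real {x | 1 - δ < φ x ∧ N * ξ x ∈ S} ≤ ν.real {x ∈ O | P x} := fun {S P} hP =>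
    measureReal_mono
      (fun x hx => ⟨hφO' ((sub_nonneg.2 hδ1).trans_lt hx.1).ne', hP x hx.1 hx.2⟩)
      (measure_ne_top_of_subset (sep_subset O P) hOν)
  refine ⟨wavePacket φ H ξ N, fun x => μ₂ + φ x * h (N * ξ x), contDiff_wavePacket hφ hHc ξ N,
    hφc.mono' ((subset_tsupport _).trans (tsupport_wavePacket_subset φ H ξ N)),
    (tsupport_wavePacket_subset φ H ξ N).trans hφO,
    continuous_const.add (hφ.continuous.mul (hh.continuous.comp
      (continuous_const.mul ξ.continuous))), fun x => ?_, fun x => ?_, ?_, ?_⟩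
  · obtain ⟨hl, hu⟩ := hrange (N * ξ x)
    constructor <;> nlinarith [(hφ01 x).1, (hφ01 x).2]
  · simpa only [add_sub_cancel_left] using hjet x
  · refine lt_of_lt_of_le (lt_of_le_of_lt (by linarith) hN₁) (hmono fun x hx hxS => ?_)
    exact (abs_add_mul_lt_two_mul (abs_le.2 ⟨by linarith, by linarith⟩) (hφ01 x).1 hx
      (hφ01 x).2 hxS).trans_le (by linarith)
  · refine lt_of_lt_of_le (lt_of_le_of_lt (by linarith) hN₂) (hmono fun x hx hxS => ?_)
    rw [show μ₂ + φ x * h (N * ξ x) - 1 = -μ₁ + φ x * h (N * ξ x) by linarith]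
    exact (abs_add_mul_lt_two_mul (abs_le.2 ⟨by linarith, by linarith⟩) (hφ01 x).1 hx
      (hφ01 x).2 hxS).trans_le (by linarith)

lemma infDist_segment_le {F : Type*} [NormedAddCommGroup F] [NormedSpace ℝ F] (w₁ w₂ : F)
    {p δ : ℝ} (hδ : 0 ≤ δ) (hp : p ∈ Icc (-δ) (1 + δ)) :
    Metric.infDist (w₁ + p • (w₂ - w₁)) (segment ℝ w₁ w₂) ≤ δ * ‖w₂ - w₁‖ := by
  obtain ⟨t, ht, hpt⟩ : ∃ t ∈ Icc (0 : ℝ) 1, |p - t| ≤ δ := by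
    refine ⟨projIcc 0 1 zero_le_one p, Subtype.prop _, ?_⟩
    rw [coe_projIcc, abs_le]
    obtain ⟨hl, hu⟩ := hp
    constructor <;> cases max_cases 0 (min 1 p) <;> cases min_cases 1 p <;> linarith
  have hmem : w₁ + t • (w₂ - w₁) ∈ segment ℝ w₁ w₂ := by
    rw [segment_eq_image']
    exact mem_image_of_mem _ ht
  refine (Metric.infDist_le_dist_of_mem hmem).trans ?_
  rw [dist_add_left, dist_eq_norm, ← sub_smul, norm_smul, Real.norm_eq_abs]
  exact mul_le_mul_of_nonneg_right hpt (norm_nonneg _)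

lemma exists_localized_wave {F : Type*} [NormedAddCommGroup F] [NormedSpace ℝ F] {O : Set E}
    (hO : IsOpen O) (hOν : ν O ≠ ⊤) {ξ : E →L[ℝ] ℝ} (hξ : ξ ≠ 0) {w₁ w₂ : F}
    (L : TwoJet E →L[ℝ] F) (hL : L (planeJet ξ) = w₂ - w₁) {μ₁ μ₂ : ℝ} (hμ₁ : 0 ≤ μ₁)
    (hμ₂ : 0 ≤ μ₂) (hμ : μ₁ + μ₂ = 1) {ε : ℝ} (hε : 0 < ε) :
    ∃ ψ : E → ℝ, ContDiff ℝ (⊤ : ℕ∞) ψ ∧ HasCompactSupport ψ ∧ tsupport ψ ⊆ O ∧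
      (∀ x, Metric.infDist (μ₁ • w₁ + μ₂ • w₂ + L (twoJet ψ x)) (segment ℝ w₁ w₂) < ε) ∧
      ∃ O₁ O₂ : Set E, IsOpen O₁ ∧ IsOpen O₂ ∧ O₁ ⊆ O ∧ O₂ ⊆ O ∧ Disjoint O₁ O₂ ∧
        (∀ x ∈ O₁, ‖μ₁ • w₁ + μ₂ • w₂ + L (twoJet ψ x) - w₁‖ < ε) ∧
        (∀ x ∈ O₂, ‖μ₁ • w₁ + μ₂ • w₂ + L (twoJet ψ x) - w₂‖ < ε) ∧
        |ν.real O₁ - μ₁ * ν.real O| < ε ∧ |ν.real O₂ - μ₂ * ν.real O| < ε := by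
  obtain ⟨K, hK, hLK⟩ := L.bound
  obtain ⟨δ, hδ, hδ4, hδK⟩ := exists_pos_le_mul_lt (show (0 : ℝ) < 1 / 4 by norm_num) hε
    (‖w₂ - w₁‖ + K + 1)
  rw [mul_add, mul_one, mul_add] at hδK
  obtain ⟨ψ, p, hψ, hψc, hψO, hp, hprange, hjet, hvol₁, hvol₂⟩ :=
    exists_twoPhase_packet ν hO hOν hξ hμ₁ hμ₂ hμ hδ
  have herr : ∀ x, ‖L (twoJet ψ x - (p x - μ₂) • planeJet ξ)‖ ≤ δ * K := fun x => by
    rw [mul_comm]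
    exact (hLK _).trans (mul_le_mul_of_nonneg_left (hjet x).le hK.le)
  have hstate : ∀ x, μ₁ • w₁ + μ₂ • w₂ + L (twoJet ψ x) =
      w₁ + p x • (w₂ - w₁) + L (twoJet ψ x - (p x - μ₂) • planeJet ξ) := fun x => by
    rw [map_sub, map_smul, hL, eq_sub_of_add_eq hμ]
    module
  have hnear : ∀ {s : ℝ} {x : E}, |s| < δ →
      ‖s • (w₂ - w₁) + L (twoJet ψ x - (p x - μ₂) • planeJet ξ)‖ < ε := fun {s x} hs => by
    have hsw : ‖s • (w₂ - w₁)‖ ≤ δ * ‖w₂ - w₁‖ := by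
      rw [norm_smul]
      exact mul_le_mul_of_nonneg_right hs.le (norm_nonneg _)
    linarith [norm_add_le_of_le hsw (herr x)]
  have hO₂ : IsOpen {x ∈ O | |p x - 1| < δ} :=
    hO.inter (isOpen_lt (hp.sub continuous_const).abs continuous_const)
  have hdisj : Disjoint {x ∈ O | |p x| < δ} {x ∈ O | |p x - 1| < δ} :=
    disjoint_left.2 fun x hx₁ hx₂ => by linarith [(abs_lt.1 hx₁.2).2, (abs_lt.1 hx₂.2).1]
  refine ⟨ψ, hψ, hψc, hψO, fun x => ?_, {x ∈ O | |p x| < δ}, {x ∈ O | |p x - 1| < δ},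
    hO.inter (isOpen_lt hp.abs continuous_const), hO₂, sep_subset O _, sep_subset O _, hdisj,
    fun x hx => ?_, fun x hx => ?_, ?_⟩
  · rw [hstate]
    refine (Metric.infDist_le_infDist_add_dist (y := w₁ + p x • (w₂ - w₁))).trans_lt ?_
    rw [dist_self_add_left]
    linarith [infDist_segment_le w₁ w₂ hδ.le (hprange x), herr x]
  · rw [hstate]
    convert hnear hx.2 using 2
    module
  · rw [hstate]
    convert hnear hx.2 using 2
    module
  · have hδε : δ < ε := by
      linarith [mul_nonneg hδ.le (norm_nonneg (w₂ - w₁)), mul_nonneg hδ.le hK.le]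
    exact abs_measureReal_sub_lt_of_disjoint hOν (sep_subset O _) (sep_subset O _) hdisj
      hO₂.measurableSet (by rw [← add_mul, hμ, one_mul]) (by linarith) (by linarith)

end TwoPhase

section Potentials

namespace TwoJet

variable {E : Type*} [NormedAddCommGroup E] [NormedSpace ℝ E]

/-- The second derivative in the directions `a` and `b`, as a functional of the jet. -/
def hess (a b : E) : TwoJet E →ₗ[ℝ] ℝ where
  toFun X := X.1 a b
  map_add' _ _ := rfl
  map_smul' _ _ := rfl

/-- The first derivative in the direction `a`, as a functional of the jet. -/
def grad (a : E) : TwoJet E →ₗ[ℝ] ℝ where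
  toFun X := X.2 a
  map_add' _ _ := rfl
  map_smul' _ _ := rfl

lemma hess_planeJet (ξ : E →L[ℝ] ℝ) (a b : E) : hess a b (planeJet ξ) = ξ a * ξ b := rfl

lemma grad_planeJet (ξ : E →L[ℝ] ℝ) (a : E) : grad a (planeJet ξ) = 0 := rfl

/-- The algebraic relations between the two-jet `X` of a function at a point and the derivative
`D` of its two-jet there: `D` extends `X`, and partial derivatives commute. -/
structure IsProlongation (X : TwoJet E) (D : E →L[ℝ] TwoJet E) : Prop where
  symm : ∀ a b, hess a b X = hess b a X
  grad_apply : ∀ a b, grad b (D a) = hess a b X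
  hess_swap : ∀ a b c, hess b c (D a) = hess a c (D b)
  hess_symm : ∀ a b c, hess b c (D a) = hess c b (D a)

lemma isProlongation_fderiv_twoJet {ψ : E → ℝ} (hψ : ContDiff ℝ 3 ψ) (x : E) :
    IsProlongation (twoJet ψ x) (fderiv ℝ (twoJet ψ) x) := by
  have hψ' : ContDiff ℝ 2 (fderiv ℝ ψ) := hψ.fderiv_right (by norm_num)
  have hψ'' : Differentiable ℝ (fderiv ℝ (fderiv ℝ ψ)) :=
    (hψ'.fderiv_right (m := 1) (by norm_num)).differentiable one_ne_zero
  let D : E →L[ℝ] TwoJet E :=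
    (fderiv ℝ (fderiv ℝ (fderiv ℝ ψ)) x).prod (fderiv ℝ (fderiv ℝ ψ) x)
  have hD : HasFDerivAt (twoJet ψ) D x :=
    HasFDerivAt.prodMk (f₁ := fderiv ℝ (fderiv ℝ ψ)) (hψ'' x).hasFDerivAt
      (hψ'.differentiable two_ne_zero x).hasFDerivAt
  have hsymm : ∀ y, IsSymmSndFDerivAt ℝ ψ y := fun y =>
    (hψ.of_le (m := 2) (by norm_num)).contDiffAt.isSymmSndFDerivAt (by simp)
  have hsymm' : IsSymmSndFDerivAt ℝ (fderiv ℝ ψ) x :=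
    hψ'.contDiffAt.isSymmSndFDerivAt (by simp)
  have hentry : ∀ b c, HasFDerivAt (fun y => fderiv ℝ (fderiv ℝ ψ) y b c)
      (((fderiv ℝ (fderiv ℝ (fderiv ℝ ψ)) x).flip b).flip c) x := fun b c => by
    simpa using ((hψ'' x).hasFDerivAt.clm_apply (hasFDerivAt_const b x)).clm_apply
      (hasFDerivAt_const c x)
  rw [hD.fderiv]
  refine ⟨hsymm x, fun a b => rfl, fun a b c => ?_, fun a b c => ?_⟩
  · exact DFunLike.congr_fun (hsymm' a b) c
  · refine DFunLike.congr_fun ((hentry b c).unique ((hentry c b).congr_of_eventuallyEq ?_)) a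
    exact .of_forall fun y => hsymm y b c

end TwoJet

lemma sum_mul_apply_single {d : ℕ} (f : Vec d →ₗ[ℝ] ℝ) (c : Vec d) :
    ∑ j, c j * f (Pi.single j 1) = f c := by
  simp only [← smul_eq_mul, ← map_smul, ← map_sum, ← pi_eq_sum_univ']

variable {d : ℕ}

/-- The average of the diagonal entries of a matrix. -/
def meanTrace : Mat d →ₗ[ℝ] ℝ := (d : ℝ)⁻¹ • ∑ k, LinearMap.proj k ∘ₗ LinearMap.proj k

lemma meanTrace_apply (A : Mat d) : meanTrace A = (d : ℝ)⁻¹ * ∑ k, A k k := by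
  simp [meanTrace]

/-- The trace-free part of the symmetric part of a matrix. -/
def deviator : Mat d →ₗ[ℝ] S0 d where
  toFun A := ⟨fun i j => (A i j + A j i) / 2 - meanTrace A * (if i = j then 1 else 0), by
    refine ⟨fun i j => by simp only [add_comm, eq_comm], ?_⟩
    rcases eq_or_ne d 0 with rfl | hd
    · rfl
    · have hd' : (d : ℝ) ≠ 0 := Nat.cast_ne_zero.2 hd
      simp [Finset.sum_sub_distrib, meanTrace_apply, hd']⟩
  map_add' A A' := by
    ext i j
    change (A i j + A' i j + (A j i + A' j i)) / 2 - meanTrace (A + A') * _ =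
      (_ - meanTrace A * _) + (_ - meanTrace A' * _)
    rw [map_add]
    ring
  map_smul' c A := by
    ext i j
    change (c * A i j + c * A j i) / 2 - meanTrace (c • A) * _ = c * (_ - meanTrace A * _)
    rw [map_smul, smul_eq_mul]
    ring

lemma deviator_apply (A : Mat d) (i j : Fin d) : (deviator A : Mat d) i j =
    (A i j + A j i) / 2 - meanTrace A * (if i = j then 1 else 0) := rfl

lemma sum_deviator_add_meanTrace (A : Fin d → Mat d) (i : Fin d) :
    ∑ j, (deviator (A j) : Mat d) i j + meanTrace (A i) = (∑ j, (A j i j + A j j i)) / 2 := by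
  simp only [deviator_apply, Finset.sum_sub_distrib, Finset.sum_div, mul_ite, mul_one, mul_zero,
    Finset.sum_ite_eq, Finset.mem_univ, if_true, sub_add_cancel]

lemma deviator_add_smul_one (U : S0 d) (q : ℝ) :
    deviator (fun i j => (U : Mat d) i j + q * (if i = j then 1 else 0)) = U := by
  obtain ⟨U, hU, htr⟩ := U
  have htrace : ∀ _ : Fin d, meanTrace (fun i j => U i j + q * (if i = j then 1 else 0)) = q :=
    fun i => by
      have hd : (d : ℝ) ≠ 0 := Nat.cast_ne_zero.2 i.pos.ne'
      simp [meanTrace_apply, Finset.sum_add_distrib, htr, hd]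
  ext i j
  rw [deviator_apply, htrace i]
  simp only [hU j i, eq_comm (a := j)]
  ring

/-- The velocity `∂_ξ ∂_ξ ψ v - ∂_v ∂_ξ ψ ξ`, which is divergence-free. -/
def velocityPotential (v ξ : Vec d) : TwoJet (Vec d) →ₗ[ℝ] Vec d :=
  (TwoJet.hess ξ ξ).smulRight v - (TwoJet.hess v ξ).smulRight ξ

/-- A matrix field whose symmetric part is divergence-free when `M` is symmetric: at frequency `η`
that symmetric part has symbol `R M Rᵀ` with `R = (ξ · η) 1 - ξ ⊗ η`, and `Rᵀ η = 0`. -/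
def stressPotential (M : Mat d) (ξ : Vec d) : TwoJet (Vec d) →ₗ[ℝ] Mat d :=
  (TwoJet.hess ξ ξ).smulRight M -
    (2 : ℝ) • LinearMap.pi (fun i => LinearMap.pi fun j => ξ i • TwoJet.hess (M j) ξ) +
    (∑ k, TwoJet.hess (Pi.single k 1) (M k)).smulRight fun i j => ξ i * ξ j

/-- A matrix field whose symmetric part has divergence `∂_b ∂_c ψ a`; it is used to absorb the
zeroth-order term of the momentum equation. -/
def sourcePotential (a b c : Vec d) : TwoJet (Vec d) →ₗ[ℝ] Mat d :=
  (TwoJet.grad c).smulRight (fun i j => a i * b j) +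
    (TwoJet.grad b).smulRight (fun i j => a i * c j) -
    (TwoJet.grad a).smulRight (fun i j => b i * c j)

/-- A matrix field whose symmetric part has divergence `B ṽ` when `M` is symmetric, where `ṽ` is
the velocity given by `velocityPotential v ξ`. -/
def momentumPotential (B M : Mat d) (v ξ : Vec d) : TwoJet (Vec d) →ₗ[ℝ] Mat d :=
  stressPotential M ξ + sourcePotential (fun i => B i ⬝ᵥ v) ξ ξ -
    sourcePotential (fun i => B i ⬝ᵥ ξ) v ξ

variable {X : TwoJet (Vec d)} {D : Vec d →L[ℝ] TwoJet (Vec d)}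

lemma sum_mul_hess_single (D : Vec d →L[ℝ] TwoJet (Vec d)) (a b c : Vec d) :
    ∑ j, c j * TwoJet.hess a b (D (Pi.single j 1)) = TwoJet.hess a b (D c) :=
  sum_mul_apply_single (TwoJet.hess a b ∘ₗ (D : Vec d →ₗ[ℝ] TwoJet (Vec d))) c

lemma sum_mul_grad_single (D : Vec d →L[ℝ] TwoJet (Vec d)) (a c : Vec d) :
    ∑ j, c j * TwoJet.grad a (D (Pi.single j 1)) = TwoJet.grad a (D c) :=
  sum_mul_apply_single (TwoJet.grad a ∘ₗ (D : Vec d →ₗ[ℝ] TwoJet (Vec d))) c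

lemma sum_velocityPotential_eq_zero (hD : TwoJet.IsProlongation X D) (v ξ : Vec d) :
    ∑ j, velocityPotential v ξ (D (Pi.single j 1)) j = 0 := by
  calc ∑ j, velocityPotential v ξ (D (Pi.single j 1)) j
      = TwoJet.hess ξ ξ (D v) - TwoJet.hess v ξ (D ξ) := by
        rw [← sum_mul_hess_single D, ← sum_mul_hess_single D, ← Finset.sum_sub_distrib]
        refine Finset.sum_congr rfl fun j _ => ?_
        simp only [velocityPotential, LinearMap.sub_apply, LinearMap.smulRight_apply,
          Pi.sub_apply, Pi.smul_apply, smul_eq_mul, mul_comm]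
    _ = 0 := by rw [hD.hess_swap, sub_self]

lemma sum_sourcePotential_add_transpose (hD : TwoJet.IsProlongation X D) (a b c : Vec d)
    (i : Fin d) :
    ∑ j, (sourcePotential a b c (D (Pi.single j 1)) i j +
      sourcePotential a b c (D (Pi.single j 1)) j i) = 2 * (TwoJet.hess b c X * a i) := by
  have hterm : ∀ j, sourcePotential a b c (D (Pi.single j 1)) i j +
      sourcePotential a b c (D (Pi.single j 1)) j i =
      a i * (b j * TwoJet.grad c (D (Pi.single j 1))) +
      a i * (c j * TwoJet.grad b (D (Pi.single j 1))) -
      b i * (c j * TwoJet.grad a (D (Pi.single j 1))) +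
      b i * (a j * TwoJet.grad c (D (Pi.single j 1))) +
      c i * (a j * TwoJet.grad b (D (Pi.single j 1))) -
      c i * (b j * TwoJet.grad a (D (Pi.single j 1))) := fun j => by
    simp only [sourcePotential, LinearMap.sub_apply, LinearMap.add_apply,
      LinearMap.smulRight_apply, Pi.sub_apply, Pi.add_apply, Pi.smul_apply, smul_eq_mul]
    ring
  simp only [hterm, Finset.sum_add_distrib, Finset.sum_sub_distrib, ← Finset.mul_sum,
    sum_mul_grad_single]
  simp only [hD.grad_apply]
  rw [hD.symm c b, hD.symm c a, hD.symm b a]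
  ring

lemma sum_stressPotential_add_transpose (hD : TwoJet.IsProlongation X D) {M : Mat d}
    (hM : ∀ i j, M i j = M j i) (ξ : Vec d) (i : Fin d) :
    ∑ j, (stressPotential M ξ (D (Pi.single j 1)) i j +
      stressPotential M ξ (D (Pi.single j 1)) j i) = 0 := by
  have hterm : ∀ j, stressPotential M ξ (D (Pi.single j 1)) i j +
      stressPotential M ξ (D (Pi.single j 1)) j i =
      2 * (M i j * TwoJet.hess ξ ξ (D (Pi.single j 1))) -
      2 * ξ i * TwoJet.hess (M j) ξ (D (Pi.single j 1)) -
      2 * (ξ j * TwoJet.hess (M i) ξ (D (Pi.single j 1))) +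
      2 * ξ i * (ξ j * ∑ k, TwoJet.hess (Pi.single k 1) (M k) (D (Pi.single j 1))) := fun j => by
    simp only [stressPotential, LinearMap.sub_apply, LinearMap.add_apply, LinearMap.smul_apply,
      LinearMap.pi_apply, LinearMap.sum_apply, LinearMap.smulRight_apply, Pi.sub_apply,
      Pi.add_apply, Pi.smul_apply, smul_eq_mul, hM j i]
    ring
  have htrace : ∑ j, ξ j * ∑ k, TwoJet.hess (Pi.single k 1) (M k) (D (Pi.single j 1)) =
      ∑ k, TwoJet.hess (M k) ξ (D (Pi.single k 1)) := by
    simp only [Finset.mul_sum]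
    rw [Finset.sum_comm]
    refine Finset.sum_congr rfl fun k _ => ?_
    rw [sum_mul_hess_single, hD.hess_swap, hD.hess_symm]
  simp only [hterm, Finset.sum_add_distrib, Finset.sum_sub_distrib, ← Finset.mul_sum,
    sum_mul_hess_single, htrace]
  rw [hD.hess_swap ξ (M i) ξ]
  ring

lemma sum_momentumPotential_add_transpose (hD : TwoJet.IsProlongation X D) (B : Mat d)
    {M : Mat d} (hM : ∀ i j, M i j = M j i) (v ξ : Vec d) (i : Fin d) :
    ∑ j, (momentumPotential B M v ξ (D (Pi.single j 1)) i j +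
      momentumPotential B M v ξ (D (Pi.single j 1)) j i) =
      2 * (B i ⬝ᵥ velocityPotential v ξ X) := by
  calc _ = ∑ j, (stressPotential M ξ (D (Pi.single j 1)) i j +
          stressPotential M ξ (D (Pi.single j 1)) j i) +
        ∑ j, (sourcePotential (fun i => B i ⬝ᵥ v) ξ ξ (D (Pi.single j 1)) i j +
          sourcePotential (fun i => B i ⬝ᵥ v) ξ ξ (D (Pi.single j 1)) j i) -
        ∑ j, (sourcePotential (fun i => B i ⬝ᵥ ξ) v ξ (D (Pi.single j 1)) i j +
          sourcePotential (fun i => B i ⬝ᵥ ξ) v ξ (D (Pi.single j 1)) j i) := by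
        rw [← Finset.sum_add_distrib, ← Finset.sum_sub_distrib]
        refine Finset.sum_congr rfl fun j _ => ?_
        simp only [momentumPotential, LinearMap.sub_apply, LinearMap.add_apply, Pi.sub_apply,
          Pi.add_apply]
        ring
    _ = 2 * (B i ⬝ᵥ velocityPotential v ξ X) := by
        rw [sum_stressPotential_add_transpose hD hM, sum_sourcePotential_add_transpose hD,
          sum_sourcePotential_add_transpose hD]
        simp only [velocityPotential, LinearMap.sub_apply, LinearMap.smulRight_apply,
          dotProduct_sub, dotProduct_smul, smul_eq_mul]
        ring

/-- The velocity-stress pair of the jet of a scalar potential. -/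
def wavePotential (B M : Mat d) (v ξ : Vec d) : TwoJet (Vec d) →L[ℝ] Vec d × S0 d :=
  LinearMap.toContinuousLinearMap
    ((velocityPotential v ξ).prod (deviator ∘ₗ momentumPotential B M v ξ))

/-- The pressure of `wavePotential`: the part of the momentum potential lost by `deviator`. -/
def wavePressure (B M : Mat d) (v ξ : Vec d) : TwoJet (Vec d) →L[ℝ] ℝ :=
  LinearMap.toContinuousLinearMap (meanTrace ∘ₗ momentumPotential B M v ξ)

lemma pd_twoJet {ψ : Vec d → ℝ} (hψ : ContDiff ℝ 3 ψ) (f : TwoJet (Vec d) →ₗ[ℝ] ℝ) (j : Fin d)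
    (x : Vec d) : pd j (fun y => f (twoJet ψ y)) x =
      f (fderiv ℝ (twoJet ψ) x (Pi.single j 1)) := by
  have hjet : HasFDerivAt (twoJet ψ) (fderiv ℝ (twoJet ψ) x) x :=
    ((contDiff_twoJet (m := 1) hψ (by norm_num)).differentiable one_ne_zero x).hasFDerivAt
  exact DFunLike.congr_fun ((LinearMap.toContinuousLinearMap f).hasFDerivAt.comp x hjet).fderiv _

lemma sum_pd_wavePotential_fst {ψ : Vec d → ℝ} (hψ : ContDiff ℝ 3 ψ) (B M : Mat d)
    (v ξ x : Vec d) :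
    ∑ j, pd j (fun y => (wavePotential B M v ξ (twoJet ψ y)).1 j) x = 0 := by
  rw [← sum_velocityPotential_eq_zero (TwoJet.isProlongation_fderiv_twoJet hψ x) v ξ]
  exact Finset.sum_congr rfl fun j _ =>
    pd_twoJet hψ (LinearMap.proj j ∘ₗ velocityPotential v ξ) j x

lemma sum_pd_wavePotential_snd_add {ψ : Vec d → ℝ} (hψ : ContDiff ℝ 3 ψ) (B : Mat d) {M : Mat d}
    (hM : ∀ i j, M i j = M j i) (v ξ x : Vec d) (i : Fin d) :
    ∑ j, pd j (fun y => ((wavePotential B M v ξ (twoJet ψ y)).2 : Mat d) i j) x +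
      pd i (fun y => wavePressure B M v ξ (twoJet ψ y)) x =
      B i ⬝ᵥ (wavePotential B M v ξ (twoJet ψ x)).1 := by
  let P := momentumPotential B M v ξ
  let D := fderiv ℝ (twoJet ψ) x
  have hstress : ∀ j, pd j (fun y => ((wavePotential B M v ξ (twoJet ψ y)).2 : Mat d) i j) x =
      (deviator (P (D (Pi.single j 1))) : Mat d) i j := fun j =>
    pd_twoJet hψ (LinearMap.proj j ∘ₗ LinearMap.proj i ∘ₗ (S0 d).subtype ∘ₗ deviator ∘ₗ P) j x
  have hpressure : pd i (fun y => wavePressure B M v ξ (twoJet ψ y)) x =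
      meanTrace (P (D (Pi.single i 1))) := pd_twoJet hψ (meanTrace ∘ₗ P) i x
  simp only [hstress, hpressure]
  rw [sum_deviator_add_meanTrace (fun j => P (D (Pi.single j 1))),
    sum_momentumPotential_add_transpose (TwoJet.isProlongation_fderiv_twoJet hψ x) B hM,
    mul_div_cancel_left₀ _ two_ne_zero]
  rfl

/-- The linear functional `x ↦ ξ · x`. -/
def dotCLM (ξ : Vec d) : Vec d →L[ℝ] ℝ := LinearMap.toContinuousLinearMap (dotProductBilin ℝ ℝ ξ)

lemma dotCLM_apply (ξ x : Vec d) : dotCLM ξ x = ξ ⬝ᵥ x := rfl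

lemma dotCLM_ne_zero {ξ : Vec d} (hξ : ξ ≠ 0) : dotCLM ξ ≠ 0 := fun h =>
  hξ (dotProduct_self_eq_zero.1 (DFunLike.congr_fun h ξ))

lemma velocityPotential_planeJet {v ξ : Vec d} (hv : ξ ⬝ᵥ v = 0) :
    velocityPotential v ξ (planeJet (dotCLM ξ)) = (ξ ⬝ᵥ ξ) ^ 2 • v := by
  simp [velocityPotential, TwoJet.hess_planeJet, dotCLM_apply, hv, sq]

lemma momentumPotential_planeJet (B : Mat d) {M : Mat d} {ξ : Vec d} (hM : ∀ i, ξ ⬝ᵥ M i = 0)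
    (v : Vec d) :
    momentumPotential B M v ξ (planeJet (dotCLM ξ)) = (ξ ⬝ᵥ ξ) ^ 2 • M := by
  ext i j
  simp [momentumPotential, stressPotential, sourcePotential, TwoJet.hess_planeJet,
    TwoJet.grad_planeJet, dotCLM_apply, hM, sq]

lemma exists_wavePotential_planeJet_eq (B : Mat d) {w : Vec d × S0 d} (hw : w ∈ Lam d) :
    ∃ (M : Mat d) (v ξ : Vec d), (∀ i j, M i j = M j i) ∧ ξ ≠ 0 ∧
      wavePotential B M v ξ (planeJet (dotCLM ξ)) = w := by
  obtain ⟨v, U⟩ := w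
  obtain ⟨-, q, ξ, hξ, hU, hv⟩ := hw
  have hvξ : ξ ⬝ᵥ v = 0 := (dotProduct_comm ξ v).trans hv
  let N : Mat d := fun i j => (U : Mat d) i j + q * (if i = j then 1 else 0)
  have hNξ : ∀ i, ξ ⬝ᵥ N i = 0 := fun i => by
    rw [← hU i, dotProduct_comm]
    simp [N, dotProduct, add_mul, Finset.sum_add_distrib]
  have hs : (ξ ⬝ᵥ ξ) ^ 2 ≠ 0 := pow_ne_zero 2 (mt dotProduct_self_eq_zero.1 hξ)
  refine ⟨((ξ ⬝ᵥ ξ) ^ 2)⁻¹ • N, ((ξ ⬝ᵥ ξ) ^ 2)⁻¹ • v, ξ, fun i j => ?_, hξ, Prod.ext ?_ ?_⟩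
  · simp only [N, Pi.smul_apply, U.2.1 i j, eq_comm (a := i)]
  · refine (velocityPotential_planeJet ?_).trans (smul_inv_smul₀ hs v)
    rw [dotProduct_smul, hvξ, smul_zero]
  · refine (congrArg deviator (momentumPotential_planeJet B (fun i => ?_) _)).trans ?_
    · rw [Pi.smul_apply, dotProduct_smul, hNξ, smul_zero]
    · rw [smul_inv_smul₀ hs, deviator_add_smul_one]

end Potentials

theorem stmt4_general {d : ℕ} (B : Mat d) {w₁ w₂ : Vec d × S0 d} {μ₁ μ₂ : ℝ} (hμ₁ : 0 ≤ μ₁)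
    (hμ₂ : 0 ≤ μ₂) (hμ : μ₁ + μ₂ = 1) (hΛ : w₂ - w₁ ∈ Lam d) {O : Set (Vec d)} (hO : IsOpen O)
    (hOfin : volume O ≠ ⊤) {ε : ℝ} (hε : 0 < ε) :
    ∃ (wt : Vec d → Vec d × S0 d) (q : Vec d → ℝ),
      ContDiff ℝ (⊤ : ℕ∞) (fun x => (wt x).1) ∧
      (∀ i j, ContDiff ℝ (⊤ : ℕ∞) (fun x => ((wt x).2 : Mat d) i j)) ∧
      ContDiff ℝ (⊤ : ℕ∞) q ∧
      HasCompactSupport wt ∧ tsupport wt ⊆ O ∧ HasCompactSupport q ∧ tsupport q ⊆ O ∧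
      (∀ x i, (∑ j, pd j (fun y => ((wt y).2 : Mat d) i j) x) + pd i q x
          = ∑ j, B i j * (wt x).1 j) ∧
      (∀ x, ∑ i, pd i (fun y => (wt y).1 i) x = 0) ∧
      (∀ x, Metric.infDist (μ₁ • w₁ + μ₂ • w₂ + wt x) (segment ℝ w₁ w₂) < ε) ∧
      ∃ O₁ O₂ : Set (Vec d), IsOpen O₁ ∧ IsOpen O₂ ∧ O₁ ⊆ O ∧ O₂ ⊆ O ∧ Disjoint O₁ O₂ ∧
        (∀ x ∈ O₁, ‖μ₁ • w₁ + μ₂ • w₂ + wt x - w₁‖ < ε) ∧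
        (∀ x ∈ O₂, ‖μ₁ • w₁ + μ₂ • w₂ + wt x - w₂‖ < ε) ∧
        |volume.real O₁ - μ₁ * volume.real O| < ε ∧
        |volume.real O₂ - μ₂ * volume.real O| < ε := by
  obtain ⟨M, v, ξ, hM, hξ, hL⟩ := exists_wavePotential_planeJet_eq B hΛ
  let L := wavePotential B M v ξ
  let Q := wavePressure B M v ξ
  obtain ⟨ψ, hψ, hψc, hψO, hnear, hphases⟩ :=
    exists_localized_wave volume hO hOfin (dotCLM_ne_zero hξ) L hL hμ₁ hμ₂ hμ hε
  have hψ3 : ContDiff ℝ 3 ψ := mod_cast contDiff_infty.1 hψ 3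
  have hjet : ContDiff ℝ (⊤ : ℕ∞) (twoJet ψ) := contDiff_twoJet hψ (by norm_cast)
  have hLjet : ContDiff ℝ (⊤ : ℕ∞) fun x => L (twoJet ψ x) := L.contDiff.comp hjet
  have hstress := (S0 d).subtypeL.contDiff.comp hLjet.snd
  have hLψ := tsupport_clm_twoJet_subset L ψ
  have hQψ := tsupport_clm_twoJet_subset Q ψ
  exact ⟨fun x => L (twoJet ψ x), fun x => Q (twoJet ψ x), hLjet.fst,
    fun i j => contDiff_pi.1 (contDiff_pi.1 hstress i) j, Q.contDiff.comp hjet,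
    hψc.of_isClosed_subset (isClosed_tsupport _) hLψ, hLψ.trans hψO,
    hψc.of_isClosed_subset (isClosed_tsupport _) hQψ, hQψ.trans hψO,
    fun x i => sum_pd_wavePotential_snd_add hψ3 B hM v ξ x i,
    sum_pd_wavePotential_fst hψ3 B M v ξ, hnear, hphases⟩

/-- **Lemma 3.3: localized plane waves.** Let `d ≥ 2`, `B` a fixed matrix,
`w₁, w₂ ∈ ℝ^d × S₀^{d×d}` and `μ₁, μ₂ > 0` with `μ₁ + μ₂ = 1` and `w₂ − w₁ ∈ Λ`; set
`w = μ₁w₁ + μ₂w₂`. For every bounded open `O ⊂ ℝ^d` and `ε > 0` there is a subsolution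
`w̃ = (ṽ, Ũ) ∈ C_c^∞(O)` with pressure `q ∈ C_c^∞(O)` (i.e. `div Ũ + ∇q = Bṽ`,
`div ṽ = 0` on ℝ^d) with (a) `dist(w + w̃ x, [w₁, w₂]) < ε` on `O`, and (b) disjoint open
`O₁, O₂ ⊂ O` with `|w + w̃ x − wᵢ| < ε` on `Oᵢ` and `||Oᵢ| − μᵢ|O|| < ε`. -/
theorem stmt4 (d : ℕ) (hd : 2 ≤ d) (B : Mat d)
    (w1 w2 : Vec d × S0 d) (μ1 μ2 : ℝ)
    (hμ1 : 0 < μ1) (hμ2 : 0 < μ2) (hμ : μ1 + μ2 = 1)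
    (hΛ : w2 - w1 ∈ Lam d)
    (O : Set (Vec d)) (hOopen : IsOpen O) (hObdd : Bornology.IsBounded O)
    (ε : ℝ) (hε : 0 < ε) :
    ∃ (wt : Vec d → Vec d × S0 d) (q : Vec d → ℝ),
      ContDiff ℝ (⊤ : ℕ∞) (fun x => (wt x).1) ∧
      (∀ i j, ContDiff ℝ (⊤ : ℕ∞) (fun x => ((wt x).2 : Mat d) i j)) ∧
      ContDiff ℝ (⊤ : ℕ∞) q ∧
      HasCompactSupport wt ∧ tsupport wt ⊆ O ∧
      HasCompactSupport q ∧ tsupport q ⊆ O ∧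
      -- div Ũ + ∇q = B ṽ on ℝ^d
      (∀ x i, (∑ j, pd j (fun y => ((wt y).2 : Mat d) i j) x) + pd i q x
          = ∑ j, B i j * (wt x).1 j) ∧
      -- div ṽ = 0 on ℝ^d
      (∀ x, ∑ i, pd i (fun y => (wt y).1 i) x = 0) ∧
      -- (a)
      (∀ x ∈ O, Metric.infDist (μ1 • w1 + μ2 • w2 + wt x) (segment ℝ w1 w2) < ε) ∧
      -- (b)
      (∃ O1 O2 : Set (Vec d), IsOpen O1 ∧ IsOpen O2 ∧ O1 ⊆ O ∧ O2 ⊆ O ∧ Disjoint O1 O2 ∧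
        (∀ x ∈ O1, ‖μ1 • w1 + μ2 • w2 + wt x - w1‖ < ε) ∧
        (∀ x ∈ O2, ‖μ1 • w1 + μ2 • w2 + wt x - w2‖ < ε) ∧
        |(volume O1).toReal - μ1 * (volume O).toReal| < ε ∧
        |(volume O2).toReal - μ2 * (volume O).toReal| < ε) := by
  obtain ⟨wt, q, hv, hU, hq, hwc, hwO, hqc, hqO, hmom, hdiv, hseg, hphases⟩ :=
    stmt4_general B hμ1.le hμ2.le hμ hΛ hOopen hObdd.measure_lt_top.ne hε
  exact ⟨wt, q, hv, hU, hq, hwc, hwO, hqc, hqO, hmom, hdiv, fun x _ => hseg x, hphases⟩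
end
end
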